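/- Let N ≥ 2 and fix y ∈ ℝ^N. Then for all b ∈ S_a and x ∈ ℝ^N the integrals in the recursive definition of J_N(b;x,y) converge absolutely, and there exists a unique function F, holomorphic on the open set D_N = {(b,x) ∈ S_a × ℂ^N : max_{1≤j<k≤N} |Im(x_j−x_k)| < 2a − Re b}, such that F(b,x) = J_N(b;x,y) for all b ∈ S_a and all x ∈ ℝ^N. -/

import Mathlib

open MeasureTheory Complex

/-- `α = 2π/(a₊a₋)`. -/
noncomputable def alphaPar (ap am : ℝ) : ℝ := 2 * Real.pi / (ap * am)

/-- The function `g(a₊,a₋;z)` from the integral representation of the hyperbolic gamma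
function. -/
noncomputable def ghyp (ap am : ℝ) (z : ℂ) : ℂ :=
  ∫ y in Set.Ioi (0 : ℝ),
    (1 / (y : ℂ)) *
      (Complex.sin (2 * (y : ℂ) * z) /
          (2 * Complex.sinh ((ap : ℂ) * (y : ℂ)) * Complex.sinh ((am : ℂ) * (y : ℂ))) -
        z / ((ap : ℂ) * (am : ℂ) * (y : ℂ)))

/-- The hyperbolic gamma function `G(a₊,a₋;z) = exp(i g(a₊,a₋;z))`. -/
noncomputable def Ghyp (ap am : ℝ) (z : ℂ) : ℂ := Complex.exp (Complex.I * ghyp ap am z)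

/-- The weight-function building block
`w(b;t) = 4 sinh²(πt/a₋) ∏_{δ=±1} G(δt + i(a₋−a₊)/2)/G(δt + ia − ib)`. -/
noncomputable def wfun (ap am : ℝ) (b : ℂ) (t : ℝ) : ℂ :=
  ((4 * Real.sinh (Real.pi * t / am) ^ 2 : ℝ) : ℂ) *
    ((Ghyp ap am ((t : ℂ) + Complex.I * ((am - ap : ℝ) : ℂ) / 2) /
        Ghyp ap am ((t : ℂ) + Complex.I * (((ap + am) / 2 : ℝ) : ℂ) - Complex.I * b)) *
      (Ghyp ap am (-(t : ℂ) + Complex.I * ((am - ap : ℝ) : ℂ) / 2) /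
        Ghyp ap am (-(t : ℂ) + Complex.I * (((ap + am) / 2 : ℝ) : ℂ) - Complex.I * b)))

/-- The kernel-function factor `G(w−ib/2)/G(w+ib/2)`. -/
noncomputable def rker (ap am : ℝ) (b : ℂ) (w : ℂ) : ℂ :=
  Ghyp ap am (w - Complex.I * b / 2) / Ghyp ap am (w + Complex.I * b / 2)

/-- The recursively defined joint eigenfunctions: `J₁(b;x,y) = exp(iαxy)` and, for `N ≥ 2`,
`J_N(b;x,y) = (exp(iαy_N(x₁+⋯+x_N))/(N−1)!) ∫_{ℝ^{N−1}} W_{N−1}(b;z) 𝒮_N^♯(b;x,z)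
J_{N−1}(b;z,(y₁−y_N,…,y_{N−1}−y_N)) dz`. -/
noncomputable def Jrec (ap am : ℝ) (b : ℂ) : (N : ℕ) → (Fin N → ℝ) → (Fin N → ℝ) → ℂ
  | 0, _, _ => 1
  | 1, x, y => Complex.exp (Complex.I * (alphaPar ap am : ℂ) * (x 0 : ℂ) * (y 0 : ℂ))
  | (N + 2), x, y =>
      (Complex.exp (Complex.I * (alphaPar ap am : ℂ) * (y (Fin.last (N + 1)) : ℂ) *
          ∑ j : Fin (N + 2), (x j : ℂ)) / (Nat.factorial (N + 1) : ℂ)) *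
        ∫ z : Fin (N + 1) → ℝ,
          (∏ q ∈ Finset.univ.filter (fun q : Fin (N + 1) × Fin (N + 1) => q.1 < q.2),
            wfun ap am b (z q.1 - z q.2)) *
          (∏ j : Fin (N + 2), ∏ k : Fin (N + 1), rker ap am b ((x j : ℂ) - (z k : ℂ))) *
          Jrec ap am b (N + 1) z
            (fun j => y (Fin.castSucc j) - y (Fin.last (N + 1)))

/-- The domain `D_N = {(b,x) ∈ S_a × ℂ^N : max_{j<k}|Im(x_j−x_k)| < 2a − Re b}`. -/
def DN (ap am : ℝ) (N : ℕ) : Set (ℂ × (Fin N → ℂ)) :=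
  {p | (0 < p.1.re ∧ p.1.re < ap + am) ∧
    ∀ j k : Fin N, |(p.2 j - p.2 k).im| < ap + am - p.1.re}

/-- A finite-dimensional family of continuous linear maps is measurable if it is so pointwise. -/
lemma aesm_clm_of_apply {E Z : Type*} [NormedAddCommGroup E] [NormedSpace ℂ E]
    [FiniteDimensional ℂ E] [MeasurableSpace Z] {μ : Measure Z} (L : Z → E →L[ℂ] ℂ)
    (h : ∀ v, AEStronglyMeasurable (fun z => L z v) μ) : AEStronglyMeasurable L μ := by
  classical
  let B := Module.finBasis ℂ E
  have : L = fun z => ∑ i, (L z (B i)) • (LinearMap.toContinuousLinearMap (B.coord i)) := by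
    funext z
    ext v
    conv_lhs => rw [← B.sum_repr v]
    simp only [map_sum, map_smul, smul_eq_mul]
    rw [ContinuousLinearMap.sum_apply]
    refine Finset.sum_congr rfl fun i _ => ?_
    simp [mul_comm]
  rw [this]
  refine Finset.aestronglyMeasurable_fun_sum _ fun i _ => ?_
  exact (h (B i)).smul_const _

lemma hol_integral {E Z : Type*} [NormedAddCommGroup E] [NormedSpace ℂ E]
    [FiniteDimensional ℂ E] [MeasurableSpace Z] {μ : Measure Z} (f : E → Z → ℂ) (U : Set E)
    (hU : IsOpen U) (hd : ∀ᵐ z ∂μ, DifferentiableOn ℂ (fun p => f p z) U)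
    (hm : ∀ p ∈ U, AEStronglyMeasurable (f p) μ)
    (hb : ∀ p₀ ∈ U, ∃ r > 0, ∃ B : Z → ℝ, Integrable B μ ∧
      ∀ᵐ z ∂μ, ∀ p ∈ Metric.ball p₀ r, p ∈ U → ‖f p z‖ ≤ B z) :
    DifferentiableOn ℂ (fun p => ∫ z, f p z ∂μ) U := by
  intro p₀ hp₀
  obtain ⟨r, hr, B, hB, hbd⟩ := hb p₀ hp₀
  obtain ⟨r', hr', hball⟩ := Metric.isOpen_iff.1 hU p₀ hp₀
  set R := min r r' with hR
  have hR0 : 0 < R := lt_min hr hr'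
  have hRU : Metric.ball p₀ R ⊆ U := (Metric.ball_subset_ball (min_le_right _ _)).trans hball
  have hF'm : AEStronglyMeasurable (fun z => fderiv ℂ (fun p => f p z) p₀) μ := by
    apply aesm_clm_of_apply
    intro v
    -- difference quotients
    have hev : ∀ᶠ n : ℕ in Filter.atTop, p₀ + ((n : ℂ) + 1)⁻¹ • v ∈ U := by
      have : Filter.Tendsto (fun n : ℕ => p₀ + ((n : ℂ) + 1)⁻¹ • v) Filter.atTop (nhds p₀) := by
        have h1 : Filter.Tendsto (fun n : ℕ => ((n : ℂ) + 1)⁻¹) Filter.atTop (nhds 0) := by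
          have := tendsto_one_div_add_atTop_nhds_zero_nat (𝕜 := ℂ)
          simpa using this
        simpa using (h1.smul_const v).const_add p₀
      exact this.eventually (hU.mem_nhds hp₀)
    obtain ⟨n₀, hn₀⟩ := Filter.eventually_atTop.1 hev
    refine aestronglyMeasurable_of_tendsto_ae (u := Filter.atTop)
      (f := fun (n : ℕ) z => (((n + n₀ : ℕ) : ℂ) + 1) *
        (f (p₀ + (((n + n₀ : ℕ) : ℂ) + 1)⁻¹ • v) z - f p₀ z)) ?_ ?_
    · intro n
      exact ((hm _ (hn₀ (n + n₀) (by omega))).sub (hm _ hp₀)).const_mul _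
    · filter_upwards [hd] with z hz
      have hD : HasFDerivAt (fun p => f p z) (fderiv ℂ (fun p => f p z) p₀) p₀ :=
        ((hz p₀ hp₀).differentiableAt (hU.mem_nhds hp₀)).hasFDerivAt
      have := hD.lim v (c := fun n : ℕ => ((n + n₀ : ℕ) : ℂ) + 1) (l := Filter.atTop) ?_
      · simpa using this
      · have h0 : Filter.Tendsto (fun n : ℕ => ((n + (n₀ + 1) : ℕ) : ℝ)) Filter.atTop Filter.atTop :=
          tendsto_natCast_atTop_atTop.comp (Filter.tendsto_add_atTop_nat (n₀ + 1))
        convert h0 using 2 with n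
        rw [← Nat.cast_succ, Complex.norm_natCast]
        norm_cast
  have key := hasFDerivAt_integral_of_dominated_of_fderiv_le (𝕜 := ℂ) (μ := μ)
    (F := f) (F' := fun p z => fderiv ℂ (fun p => f p z) p) (x₀ := p₀)
    (bound := fun z => (2 * B z) / (R / 2)) (s := Metric.ball p₀ (R / 2))
    (Metric.ball_mem_nhds p₀ (by positivity)) ?_ ?_ hF'm ?_ ?_ ?_
  · exact key.differentiableAt.differentiableWithinAt
  · filter_upwards [Metric.ball_mem_nhds p₀ hR0] with p hp using hm p (hRU hp)
  · refine hB.mono' (hm _ hp₀) ?_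
    filter_upwards [hbd] with z hz using hz p₀ (Metric.mem_ball_self hr) hp₀
  · filter_upwards [hd, hbd] with z hz hz2 p hp
    have hsub : Metric.ball p (R / 2) ⊆ Metric.ball p₀ R := by
      apply Metric.ball_subset_ball'
      have := Metric.mem_ball.1 hp
      linarith
    have hbz : ∀ q ∈ Metric.ball p₀ R, ‖f q z‖ ≤ B z := fun q hq =>
      hz2 q (Metric.ball_subset_ball (min_le_left _ _) hq) (hRU hq)
    refine Complex.norm_fderiv_le_div_of_mapsTo_ball (f := fun p => f p z)
      (hz.mono (hsub.trans hRU)) ?_ (by positivity)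
    intro q hq
    rw [Metric.mem_closedBall, dist_eq_norm]
    have h1 := hbz q (hsub hq)
    have h2 := hbz p (hsub (Metric.mem_ball_self (by positivity)))
    have h3 := norm_sub_le (f q z) (f p z)
    simp only
    linarith
  · exact (hB.const_mul 2).div_const _
  · filter_upwards [hd] with z hz p hp
    have hpU : p ∈ U := hRU (Metric.ball_subset_ball (by linarith) hp)
    exact ((hz p hpU).differentiableAt (hU.mem_nhds hpU)).hasFDerivAt

lemma norm_sin_le_exp (w : ℂ) : ‖Complex.sin w‖ ≤ Real.exp |w.im| := by
  rw [Complex.sin]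
  have h1 : ‖Complex.exp (-w * I)‖ ≤ Real.exp |w.im| := by
    rw [Complex.norm_exp]; apply Real.exp_le_exp.2; simp; exact le_abs_self _
  have h2 : ‖Complex.exp (w * I)‖ ≤ Real.exp |w.im| := by
    rw [Complex.norm_exp]; apply Real.exp_le_exp.2; simp; exact neg_le_abs _
  rw [norm_div, norm_mul, Complex.norm_I]
  have := norm_sub_le (Complex.exp (-w * I)) (Complex.exp (w * I))
  simp only [mul_one, Complex.norm_ofNat]
  linarith

lemma norm_sin_sub_le (w : ℂ) : ‖Complex.sin w - w‖ ≤ ‖w‖ ^ 3 * Real.exp ‖w‖ := by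
  have h1 := Complex.norm_exp_sub_sum_le_norm_mul_exp (-w * I) 3
  have h2 := Complex.norm_exp_sub_sum_le_norm_mul_exp (w * I) 3
  simp only [Finset.sum_range_succ, Finset.sum_range_zero, norm_mul, norm_neg, Complex.norm_I,
    mul_one] at h1 h2
  have h3 : Complex.sin w - w = ((Complex.exp (-w * I) - (0 + (-w * I) ^ 0 / (Nat.factorial 0) +
      (-w * I) ^ 1 / (Nat.factorial 1) + (-w * I) ^ 2 / (Nat.factorial 2))) -
      (Complex.exp (w * I) - (0 + (w * I) ^ 0 / (Nat.factorial 0) +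
      (w * I) ^ 1 / (Nat.factorial 1) + (w * I) ^ 2 / (Nat.factorial 2)))) * I / 2 := by
    rw [Complex.sin]
    simp [Nat.factorial]
    ring_nf
    simp
  rw [h3, norm_div, norm_mul, Complex.norm_I, Complex.norm_ofNat]
  refine (div_le_div_of_nonneg_right (mul_le_mul_of_nonneg_right (norm_sub_le _ _) zero_le_one)
    zero_le_two).trans ?_
  linarith

lemma sinh_le_mul_cosh' {x : ℝ} (hx : 0 ≤ x) : Real.sinh x ≤ x * Real.cosh x := by
  have hmono : MonotoneOn (fun x : ℝ => x * Real.cosh x - Real.sinh x) (Set.Ici 0) := by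
    apply monotoneOn_of_deriv_nonneg (convex_Ici 0)
    · fun_prop
    · fun_prop
    · intro t ht
      rw [interior_Ici] at ht
      have : HasDerivAt (fun x : ℝ => x * Real.cosh x - Real.sinh x)
          (1 * Real.cosh t + t * Real.sinh t - Real.cosh t) t :=
        ((hasDerivAt_id t).mul (Real.hasDerivAt_cosh t)).sub (Real.hasDerivAt_sinh t)
      rw [this.deriv]
      have := mul_nonneg (le_of_lt ht) (Real.sinh_nonneg_iff.2 (le_of_lt ht))
      linarith
  have := hmono (Set.mem_Ici.2 le_rfl) (Set.mem_Ici.2 hx) hx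
  simp at this
  linarith

lemma sinh_le_mul_exp {x : ℝ} (hx : 0 ≤ x) : Real.sinh x ≤ x * Real.exp (x ^ 2 / 2) :=
  (sinh_le_mul_cosh' hx).trans (mul_le_mul_of_nonneg_left (Real.cosh_le_exp_half_sq x) hx)

lemma sinh_ge_exp {x x₀ : ℝ} (hx : x₀ ≤ x) :
    Real.exp x * ((1 - Real.exp (-2 * x₀)) / 2) ≤ Real.sinh x := by
  rw [Real.sinh_eq]
  have h1 : Real.exp (-x) = Real.exp x * Real.exp (-2 * x) := by rw [← Real.exp_add]; ring_nf
  have h2 : Real.exp (-2 * x) ≤ Real.exp (-2 * x₀) := Real.exp_le_exp.2 (by linarith)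
  rw [h1]
  nlinarith [Real.exp_pos x]

noncomputable def gint (ap am : ℝ) (z : ℂ) (y : ℝ) : ℂ :=
    (1 / (y : ℂ)) *
      (Complex.sin (2 * (y : ℂ) * z) /
          (2 * Complex.sinh ((ap : ℂ) * (y : ℂ)) * Complex.sinh ((am : ℂ) * (y : ℂ))) -
        z / ((ap : ℂ) * (am : ℂ) * (y : ℂ)))

lemma gint_small (ap am : ℝ) (hap : 0 < ap) (ham : 0 < am) (R : ℝ) (y : ℝ) (hy : 0 < y)
    (hy1 : y ≤ 1) (z : ℂ) (hz : ‖z‖ ≤ R) :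
    ‖gint ap am z y‖ ≤ 4 * R ^ 3 * Real.exp (2 * R) / (ap * am) +
      R * (ap ^ 2 + am ^ 2) / (2 * (ap * am)) := by
  have hR : 0 ≤ R := (norm_nonneg z).trans hz
  set P := Real.sinh (ap * y) * Real.sinh (am * y) with hP
  set q := ap * am * y ^ 2 with hq
  have hq0 : 0 < q := by positivity
  have hqP : q ≤ P := by
    have h1 := Real.self_le_sinh_iff.2 (mul_pos hap hy).le
    have h2 := Real.self_le_sinh_iff.2 (mul_pos ham hy).le
    have := mul_le_mul h1 h2 (by positivity) ((mul_pos hap hy).le.trans h1)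
    calc q = ap * y * (am * y) := by rw [hq]; ring
      _ ≤ P := this
  have hP0 : 0 < P := hq0.trans_le hqP
  have hPq : P ≤ q * Real.exp ((ap ^ 2 + am ^ 2) * y ^ 2 / 2) := by
    have h1 := sinh_le_mul_exp (mul_pos hap hy).le
    have h2 := sinh_le_mul_exp (mul_pos ham hy).le
    have := mul_le_mul h1 h2 (Real.sinh_nonneg_iff.2 (by positivity)) (by positivity)
    refine this.trans_eq ?_
    rw [show ap * y * Real.exp ((ap * y) ^ 2 / 2) * (am * y * Real.exp ((am * y) ^ 2 / 2)) =
      q * (Real.exp ((ap * y) ^ 2 / 2) * Real.exp ((am * y) ^ 2 / 2)) by rw [hq]; ring,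
      ← Real.exp_add]
    congr 2; ring
  have hdiff : |1 / P - 1 / q| ≤ (ap ^ 2 + am ^ 2) / (2 * (ap * am)) := by
    have h1 : 1 / P ≤ 1 / q := one_div_le_one_div_of_le hq0 hqP
    rw [abs_of_nonpos (by linarith)]
    have h2 : 1 / (q * Real.exp ((ap ^ 2 + am ^ 2) * y ^ 2 / 2)) ≤ 1 / P :=
      one_div_le_one_div_of_le hP0 hPq
    have h3 : 1 / (q * Real.exp ((ap ^ 2 + am ^ 2) * y ^ 2 / 2)) =
        1 / q * Real.exp (-((ap ^ 2 + am ^ 2) * y ^ 2 / 2)) := by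
      rw [Real.exp_neg]; field_simp
    have h4 := Real.add_one_le_exp (-((ap ^ 2 + am ^ 2) * y ^ 2 / 2))
    have h5 := mul_le_mul_of_nonneg_left h4 (by positivity : 0 ≤ 1 / q)
    have h6 : 1 / q * (-((ap ^ 2 + am ^ 2) * y ^ 2 / 2) + 1) =
        1 / q - (ap ^ 2 + am ^ 2) / (2 * (ap * am)) := by
      rw [hq]; field_simp; ring
    linarith
  have hE : gint ap am z y = (Complex.sin (2 * y * z) - 2 * y * z) * ((1 / (2 * y * P) : ℝ) : ℂ)
      + z * ((1 / P - 1 / q : ℝ) : ℂ) := by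
    have hyc : (y : ℂ) ≠ 0 := by exact_mod_cast hy.ne'
    have hac : (ap : ℂ) ≠ 0 := by exact_mod_cast hap.ne'
    have hmc : (am : ℂ) ≠ 0 := by exact_mod_cast ham.ne'
    have hPc : (P : ℂ) ≠ 0 := by exact_mod_cast hP0.ne'
    have : Complex.sinh ((ap : ℂ) * (y : ℂ)) * Complex.sinh ((am : ℂ) * (y : ℂ)) = (P : ℂ) := by
      rw [hP]; push_cast; rfl
    rw [gint, mul_assoc 2 (Complex.sinh _), this, hq]
    push_cast
    field_simp
    ring
  rw [hE]
  refine (norm_add_le _ _).trans (add_le_add ?_ ?_)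
  · rw [norm_mul, Complex.norm_real, Real.norm_eq_abs, abs_of_pos (by positivity)]
    have hw : ‖(2 * y * z : ℂ)‖ ≤ 2 * y * R := by
      rw [norm_mul, norm_mul, Complex.norm_real, Real.norm_eq_abs, abs_of_pos hy]
      simp; gcongr
    have h1 := norm_sin_sub_le (2 * y * z)
    have h2 : ‖(2 * y * z : ℂ)‖ ^ 3 * Real.exp ‖(2 * y * z : ℂ)‖ ≤
        (2 * y * R) ^ 3 * Real.exp (2 * R) := by
      gcongr
      refine hw.trans ?_
      nlinarith
    calc _ ≤ (2 * y * R) ^ 3 * Real.exp (2 * R) * (1 / (2 * y * q)) := by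
          refine mul_le_mul (h1.trans h2) ?_ (by positivity) (by positivity)
          apply one_div_le_one_div_of_le (by positivity)
          gcongr
      _ = _ := by rw [hq]; field_simp; ring
  · rw [norm_mul, Complex.norm_real, Real.norm_eq_abs]
    calc _ ≤ R * ((ap ^ 2 + am ^ 2) / (2 * (ap * am))) := by gcongr
      _ = _ := by ring

lemma gint_large (ap am : ℝ) (hap : 0 < ap) (ham : 0 < am) (σ : ℝ) (R : ℝ) (y : ℝ)
    (hy1 : 1 ≤ y) (z : ℂ) (hz : ‖z‖ ≤ R) (hσ : |z.im| ≤ σ) :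
    ‖gint ap am z y‖ ≤ (1 / (2 * ((1 - Real.exp (-2 * ap)) / 2 * ((1 - Real.exp (-2 * am)) / 2)))) *
      Real.exp (-(ap + am - 2 * σ) * y) + R / (ap * am) * (y ^ 2)⁻¹ := by
  have hy : 0 < y := by linarith
  have hR : 0 ≤ R := (norm_nonneg z).trans hz
  set cp := (1 - Real.exp (-2 * ap)) / 2
  set cm := (1 - Real.exp (-2 * am)) / 2
  have hcp : 0 < cp := by
    have : Real.exp (-2 * ap) < 1 := (by rw [Real.exp_lt_one_iff]; linarith)
    simp only [cp]; linarith
  have hcm : 0 < cm := by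
    have : Real.exp (-2 * am) < 1 := (by rw [Real.exp_lt_one_iff]; linarith)
    simp only [cm]; linarith
  have hsp : Real.exp (ap * y) * cp ≤ Real.sinh (ap * y) := sinh_ge_exp (by nlinarith)
  have hsm : Real.exp (am * y) * cm ≤ Real.sinh (am * y) := sinh_ge_exp (by nlinarith)
  have hsp0 : 0 < Real.sinh (ap * y) := lt_of_lt_of_le (by positivity) hsp
  have hsm0 : 0 < Real.sinh (am * y) := lt_of_lt_of_le (by positivity) hsm
  rw [gint, mul_sub]
  refine (norm_sub_le _ _).trans (add_le_add ?_ ?_)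
  · have h1 : ‖(1 / (y : ℂ))‖ ≤ 1 := by
      rw [norm_div, Complex.norm_real, Real.norm_eq_abs, abs_of_pos hy, norm_one]
      rw [div_le_one hy]; exact hy1
    have h2 : ‖Complex.sin (2 * y * z)‖ ≤ Real.exp (2 * σ * y) := by
      refine (norm_sin_le_exp _).trans (Real.exp_le_exp.2 ?_)
      have : ((2 * y * z : ℂ)).im = 2 * y * z.im := by
        simp
      rw [this, abs_mul, abs_of_pos (by positivity : 0 < 2 * y)]
      nlinarith
    have h3 : ‖(2 * Complex.sinh ((ap : ℂ) * (y : ℂ)) * Complex.sinh ((am : ℂ) * (y : ℂ)))‖ =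
        2 * (Real.sinh (ap * y) * Real.sinh (am * y)) := by
      rw [← Complex.ofReal_mul, ← Complex.ofReal_mul, ← Complex.ofReal_sinh,
        ← Complex.ofReal_sinh, norm_mul, norm_mul, Complex.norm_real, Complex.norm_real,
        Real.norm_eq_abs, Real.norm_eq_abs, abs_of_pos hsp0, abs_of_pos hsm0]
      simp; ring
    rw [norm_mul, norm_div (Complex.sin _), h3]
    have h4 : (Real.exp (ap * y) * cp) * (Real.exp (am * y) * cm) ≤
      Real.sinh (ap * y) * Real.sinh (am * y) := mul_le_mul hsp hsm (by positivity) hsp0.le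
    calc _ ≤ 1 * (Real.exp (2 * σ * y) / (2 * ((Real.exp (ap * y) * cp) * (Real.exp (am * y) * cm)))) := by
          gcongr
      _ = _ := by
          rw [show -(ap + am - 2 * σ) * y = 2 * σ * y - ap * y - am * y by ring,
            Real.exp_sub, Real.exp_sub]
          field_simp
  · rw [norm_mul, norm_div, norm_div, norm_mul, norm_mul, Complex.norm_real, Complex.norm_real,
      Complex.norm_real, Real.norm_eq_abs, Real.norm_eq_abs, Real.norm_eq_abs, abs_of_pos hy,
      abs_of_pos hap, abs_of_pos ham, norm_one]
    calc 1 / y * (‖z‖ / (ap * am * y)) ≤ 1 / y * (R / (ap * am * y)) := by gcongr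
      _ = _ := by field_simp

lemma gint_bound (ap am : ℝ) (hap : 0 < ap) (ham : 0 < am) (σ R : ℝ) (hσ : 2 * σ < ap + am) :
    ∃ B : ℝ → ℝ, IntegrableOn B (Set.Ioi 0) ∧ ∀ y : ℝ, 0 < y → ∀ z : ℂ, |z.im| ≤ σ → ‖z‖ ≤ R →
      ‖gint ap am z y‖ ≤ B y := by
  set C1 := 4 * R ^ 3 * Real.exp (2 * R) / (ap * am) +
      R * (ap ^ 2 + am ^ 2) / (2 * (ap * am))
  set C2 := (1 / (2 * ((1 - Real.exp (-2 * ap)) / 2 * ((1 - Real.exp (-2 * am)) / 2))))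
  set C3 := R / (ap * am)
  let B2 : ℝ → ℝ := fun y => C2 * Real.exp (-(ap + am - 2 * σ) * y) + C3 * (y ^ 2)⁻¹
  refine ⟨fun y => if y ≤ 1 then C1 else B2 y, ?_, ?_⟩
  · rw [← Set.Ioc_union_Ioi_eq_Ioi (zero_le_one (α := ℝ))]
    apply IntegrableOn.union
    · refine IntegrableOn.congr_fun (f := fun _ => C1) (by simp) ?_ measurableSet_Ioc
      intro y hy
      simp [hy.2]
    · refine IntegrableOn.congr_fun (f := B2) ?_ ?_ measurableSet_Ioi
      · apply Integrable.add
        · exact (exp_neg_integrableOn_Ioi 1 (by linarith)).const_mul _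
        · apply Integrable.const_mul
          have := integrableOn_Ioi_rpow_of_lt (a := -2) (by norm_num) (c := 1) one_pos
          refine this.congr_fun ?_ measurableSet_Ioi
          intro y hy
          have hy0 : (0:ℝ) ≤ y := by linarith [Set.mem_Ioi.1 hy]
          simp only
          rw [Real.rpow_neg hy0]; norm_cast
      · intro y hy
        simp [not_le.2 (Set.mem_Ioi.1 hy)]
  · intro y hy z hz hz2
    simp only
    split_ifs with h
    · exact gint_small ap am hap ham R y hy h z hz2
    · exact gint_large ap am hap ham σ R y (by linarith) z hz2 hz

lemma inner_u {y : ℝ} (hy : 0 < y) :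
    ∫ u in Set.Ioi (0:ℝ), u * Real.exp (-u * y) = 1 / y ^ 2 := by
  have := Real.integral_rpow_mul_exp_neg_mul_Ioi (a := 2) (r := y) (by norm_num) hy
  rw [Real.Gamma_two] at this
  simp only [mul_one] at this
  rw [show (1 / y ^ 2 : ℝ) = (1 / y) ^ (2:ℝ) by norm_cast; simp, ← this]
  refine setIntegral_congr_fun measurableSet_Ioi fun u hu => ?_
  rw [show (2:ℝ) - 1 = 1 by norm_num, Real.rpow_one]; ring_nf

lemma inner_y_int {u : ℝ} (hu : 0 < u) (t : ℝ) :
    IntegrableOn (fun y : ℝ => (1 - Real.cos (2 * y * t)) * (u * Real.exp (-u * y))) (Set.Ioi 0) := by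
  have h1 : IntegrableOn (fun y : ℝ => u * Real.exp (-u * y)) (Set.Ioi 0) :=
    (exp_neg_integrableOn_Ioi 0 hu).const_mul _
  refine Integrable.bdd_mul (c := 2) h1 (by fun_prop) ?_
  refine Filter.Eventually.of_forall fun y => ?_
  rw [Real.norm_eq_abs, abs_le]
  constructor <;> linarith [Real.cos_le_one (2 * y * t), Real.neg_one_le_cos (2 * y * t)]

lemma inner_y {u : ℝ} (hu : 0 < u) (t : ℝ) :
    ∫ y in Set.Ioi (0:ℝ), (1 - Real.cos (2 * y * t)) * (u * Real.exp (-u * y)) =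
      4 * t ^ 2 / (u ^ 2 + 4 * t ^ 2) := by
  have h0 : (((-u : ℝ) : ℂ) + 2 * t * I).re < 0 := by simpa using hu
  have h1 := integral_exp_mul_complex_Ioi h0 0
  have hi1 := integrableOn_exp_mul_complex_Ioi h0 0
  have h2 : ∫ y in Set.Ioi (0:ℝ), Real.exp (-u * y) * Real.cos (2 * y * t) =
      u / (u ^ 2 + 4 * t ^ 2) := by
    have h3 : ∀ y : ℝ, Real.exp (-u * y) * Real.cos (2 * y * t) =
        (Complex.exp ((((-u : ℝ) : ℂ) + 2 * t * I) * y)).re := by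
      intro y
      rw [Complex.exp_re]
      simp
      ring_nf
    simp_rw [h3]
    have h4 := integral_re hi1
    simp only [RCLike.re_to_complex] at h4
    rw [h4, h1]
    simp [Complex.div_re, Complex.normSq_apply]
    have : u ^ 2 + 4 * t ^ 2 ≠ 0 := by positivity
    field_simp
    ring
  have h5 : ∫ y in Set.Ioi (0:ℝ), Real.exp (-u * y) = 1 / u := by
    have := integral_exp_mul_Ioi (a := -u) (by linarith) 0
    rw [this]; simp
  have hint1 : IntegrableOn (fun y : ℝ => Real.exp (-u * y)) (Set.Ioi 0) :=
    (exp_neg_integrableOn_Ioi 0 hu)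
  have hint2 : IntegrableOn (fun y : ℝ => Real.exp (-u * y) * Real.cos (2 * y * t)) (Set.Ioi 0) := by
    refine Integrable.mul_bdd (c := 1) hint1 (by fun_prop) ?_
    refine Filter.Eventually.of_forall fun y => ?_
    rw [Real.norm_eq_abs]; exact Real.abs_cos_le_one _
  have : ∀ y : ℝ, (1 - Real.cos (2 * y * t)) * (u * Real.exp (-u * y)) =
      u * (Real.exp (-u * y) - Real.exp (-u * y) * Real.cos (2 * y * t)) := fun y => by ring
  simp_rw [this]
  rw [integral_const_mul, integral_sub hint1 hint2, h5, h2]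
  have : u ^ 2 + 4 * t ^ 2 ≠ 0 := by positivity
  field_simp
  ring

lemma outer_u (t : ℝ) : IntegrableOn (fun u : ℝ => 4 * t ^ 2 / (u ^ 2 + 4 * t ^ 2)) (Set.Ioi 0) ∧
    ∫ u in Set.Ioi (0:ℝ), 4 * t ^ 2 / (u ^ 2 + 4 * t ^ 2) = Real.pi * |t| := by
  by_cases ht : t = 0
  · subst ht; simp
  have hT : 0 < (2 * |t|)⁻¹ := by positivity
  have hE : ∀ u : ℝ, 4 * t ^ 2 / (u ^ 2 + 4 * t ^ 2) = (1 + ((2 * |t|)⁻¹ * u) ^ 2)⁻¹ := by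
    intro u
    have : t ^ 2 = |t| ^ 2 := (sq_abs t).symm
    rw [this]
    have : |t| ≠ 0 := abs_ne_zero.2 ht
    field_simp
    ring
  simp_rw [hE]
  constructor
  · have := (integrableOn_Ioi_comp_mul_left_iff (fun x : ℝ => (1 + x ^ 2)⁻¹) 0 hT).2
      (integrable_inv_one_add_sq.integrableOn)
    exact this
  · rw [integral_comp_mul_left_Ioi (fun x : ℝ => (1 + x ^ 2)⁻¹) 0 hT]
    rw [mul_zero, integral_Ioi_inv_one_add_sq]
    simp; ring

lemma cos_int (t : ℝ) : IntegrableOn (fun y : ℝ => (1 - Real.cos (2 * y * t)) / y ^ 2) (Set.Ioi 0) ∧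
    ∫ y in Set.Ioi (0:ℝ), (1 - Real.cos (2 * y * t)) / y ^ 2 = Real.pi * |t| := by
  let f : ℝ → ℝ → ℝ := fun y u => (1 - Real.cos (2 * y * t)) * (u * Real.exp (-u * y))
  have hfi : Integrable (Function.uncurry f)
      ((volume.restrict (Set.Ioi (0:ℝ))).prod (volume.restrict (Set.Ioi (0:ℝ)))) := by
    rw [integrable_prod_iff' (by
      apply Continuous.aestronglyMeasurable
      simp only [f, Function.uncurry_def]
      fun_prop)]
    constructor
    · filter_upwards [ae_restrict_mem measurableSet_Ioi] with u hu
      exact inner_y_int hu t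
    · refine (outer_u t).1.congr_fun ?_ measurableSet_Ioi
      intro u hu
      simp only
      rw [← inner_y hu t]
      refine setIntegral_congr_fun measurableSet_Ioi fun y hy => ?_
      simp only [Function.uncurry, f]
      rw [Real.norm_eq_abs, abs_of_nonneg]
      have := Real.cos_le_one (2 * y * t)
      have hu' : 0 < u := hu
      exact mul_nonneg (by linarith) (by positivity)
  have hA : ∀ y ∈ Set.Ioi (0:ℝ), ∫ u in Set.Ioi (0:ℝ), f y u = (1 - Real.cos (2 * y * t)) / y ^ 2 := by
    intro y hy
    simp only [f]
    rw [integral_const_mul, inner_u hy]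
    ring
  constructor
  · exact IntegrableOn.congr_fun hfi.integral_prod_left hA measurableSet_Ioi
  · rw [← setIntegral_congr_fun measurableSet_Ioi hA, integral_integral_swap hfi, ← (outer_u t).2]
    exact setIntegral_congr_fun measurableSet_Ioi fun u hu => inner_y hu t

lemma ghyp_eq (ap am : ℝ) (z : ℂ) : ghyp ap am z = ∫ y in Set.Ioi (0:ℝ), gint ap am z y := rfl

lemma gint_meas (ap am : ℝ) (z : ℂ) :
    AEStronglyMeasurable (gint ap am z) (volume.restrict (Set.Ioi 0)) := by
  apply Measurable.aestronglyMeasurable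
  unfold gint
  fun_prop

lemma gint_im (ap am : ℝ) (z : ℂ) (y : ℝ) :
    (gint ap am z y).im = Real.cos (2 * y * z.re) * (gint ap am (z.im * I) y).im -
      z.im / (ap * am) * ((1 - Real.cos (2 * y * z.re)) / y ^ 2) := by
  have h1 : ∀ w : ℂ, (gint ap am w y).im = 1 / y * ((Complex.sin (2 * y * w)).im /
      (2 * Real.sinh (ap * y) * Real.sinh (am * y)) - w.im / (ap * am * y)) := by
    intro w
    have : gint ap am w y = ((1 / y : ℝ) : ℂ) * (Complex.sin (2 * y * w) /
      ((2 * Real.sinh (ap * y) * Real.sinh (am * y) : ℝ) : ℂ) - w / ((ap * am * y : ℝ) : ℂ)) := by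
      unfold gint; push_cast; rfl
    rw [this, Complex.im_ofReal_mul, Complex.sub_im, Complex.div_ofReal_im, Complex.div_ofReal_im]
  have h2 : ∀ w : ℂ, (Complex.sin (2 * y * w)).im =
      Real.cos (2 * y * w.re) * Real.sinh (2 * y * w.im) := by
    intro w
    have : (2 * y * w : ℂ) = ((2 * y * w.re : ℝ) : ℂ) + ((2 * y * w.im : ℝ) : ℂ) * I := by
      conv_lhs => rw [← Complex.re_add_im w]
      push_cast; ring
    rw [this, Complex.sin_add_mul_I, ← Complex.ofReal_sin, ← Complex.ofReal_cosh,
      ← Complex.ofReal_cos, ← Complex.ofReal_sinh, ← Complex.ofReal_mul, ← Complex.ofReal_mul]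
    simp only [add_im, mul_im, ofReal_re, ofReal_im, I_re, I_im, mul_zero, mul_one, zero_add,
      add_zero]
  rw [h1, h1, h2, h2]
  simp only [mul_re, ofReal_re, I_re, mul_zero, ofReal_im, I_im, mul_one, sub_self, Real.cos_zero,
    one_mul, mul_im, add_zero, zero_add, zero_mul]
  by_cases hy : y = 0
  · subst hy; simp
  by_cases hap : ap = 0
  · subst hap; simp
  by_cases ham : am = 0
  · subst ham; simp
  field_simp
  ring

lemma gint_integrable (ap am : ℝ) (hap : 0 < ap) (ham : 0 < am) (z : ℂ)
    (hz : 2 * |z.im| < ap + am) : IntegrableOn (gint ap am z) (Set.Ioi 0) := by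
  obtain ⟨B, hB, hb⟩ := gint_bound ap am hap ham |z.im| ‖z‖ hz
  refine Integrable.mono' hB (gint_meas ap am z) ?_
  filter_upwards [ae_restrict_mem measurableSet_Ioi] with y hy using hb y hy z le_rfl le_rfl

lemma ghyp_im_bound (ap am : ℝ) (hap : 0 < ap) (ham : 0 < am) (σ : ℝ) (hσ : 2 * σ < ap + am) :
    ∃ C : ℝ, ∀ z : ℂ, |z.im| ≤ σ →
      |(ghyp ap am z).im + alphaPar ap am / 2 * |z.re| * z.im| ≤ C := by
  obtain ⟨B, hB, hb⟩ := gint_bound ap am hap ham σ σ hσ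
  refine ⟨∫ y in Set.Ioi (0:ℝ), B y, fun z hz => ?_⟩
  have hzi := gint_integrable ap am hap ham z (by linarith)
  have hwi := gint_integrable ap am hap ham (z.im * I) (by simpa using by linarith)
  have h1 : (ghyp ap am z).im = ∫ y in Set.Ioi (0:ℝ), (gint ap am z y).im := by
    rw [ghyp_eq]
    exact (integral_im hzi).symm
  have hci : IntegrableOn (fun y => Real.cos (2 * y * z.re) * (gint ap am (z.im * I) y).im)
      (Set.Ioi 0) := by
    have hwi' : IntegrableOn (fun y => (gint ap am (z.im * I) y).im) (Set.Ioi 0) := hwi.im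
    refine Integrable.bdd_mul (c := 1) hwi' (by fun_prop) ?_
    refine Filter.Eventually.of_forall fun y => ?_
    rw [Real.norm_eq_abs]; exact Real.abs_cos_le_one _
  have h2 : (ghyp ap am z).im = (∫ y in Set.Ioi (0:ℝ),
      Real.cos (2 * y * z.re) * (gint ap am (z.im * I) y).im) -
      z.im / (ap * am) * (Real.pi * |z.re|) := by
    rw [h1, ← (cos_int z.re).2, ← integral_const_mul,
      ← integral_sub hci ((cos_int z.re).1.const_mul _)]
    simp_rw [gint_im ap am z]
  have h3 : (ghyp ap am z).im + alphaPar ap am / 2 * |z.re| * z.im = (∫ y in Set.Ioi (0:ℝ),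
      Real.cos (2 * y * z.re) * (gint ap am (z.im * I) y).im) := by
    rw [h2, alphaPar]
    have : z.im / (ap * am) * (Real.pi * |z.re|) =
      2 * Real.pi / (ap * am) / 2 * |z.re| * z.im := by field_simp
    rw [this, sub_add_cancel]
  rw [h3, ← Real.norm_eq_abs]
  refine norm_integral_le_of_norm_le hB ?_
  filter_upwards [ae_restrict_mem measurableSet_Ioi] with y hy
  rw [norm_mul]
  have h4 := hb y hy (z.im * I) (by simpa using hz) (by simpa using hz)
  have h5 : ‖(gint ap am (z.im * I) y).im‖ ≤ ‖gint ap am (z.im * I) y‖ := Complex.abs_im_le_norm _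
  have h6 : ‖Real.cos (2 * y * z.re)‖ ≤ 1 := Real.abs_cos_le_one _
  calc _ ≤ 1 * ‖gint ap am (z.im * I) y‖ := mul_le_mul h6 h5 (norm_nonneg _) zero_le_one
    _ ≤ _ := by linarith

def gstrip (ap am : ℝ) : Set ℂ := {z | 2 * |z.im| < ap + am}

lemma gstrip_open (ap am : ℝ) : IsOpen (gstrip ap am) :=
  isOpen_lt (by fun_prop) continuous_const

lemma ghyp_diff (ap am : ℝ) (hap : 0 < ap) (ham : 0 < am) :
    DifferentiableOn ℂ (ghyp ap am) (gstrip ap am) := by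
  have := hol_integral (μ := volume.restrict (Set.Ioi (0:ℝ))) (gint ap am) (gstrip ap am)
    (gstrip_open ap am) ?_ (fun p _ => gint_meas ap am p) ?_
  · exact this
  · refine Filter.Eventually.of_forall fun y => ?_
    apply Differentiable.differentiableOn
    unfold gint
    fun_prop
  · intro p hp
    have hp' : 2 * |p.im| < ap + am := hp
    obtain ⟨σ, hσ1, hσ2⟩ := exists_between (show |p.im| < (ap + am) / 2 by linarith)
    obtain ⟨B, hB, hb⟩ := gint_bound ap am hap ham σ (‖p‖ + (σ - |p.im|)) (by linarith)
    refine ⟨σ - |p.im|, by linarith, B, hB, ?_⟩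
    filter_upwards [ae_restrict_mem measurableSet_Ioi] with y hy q hq _
    rw [Metric.mem_ball, dist_eq_norm] at hq
    apply hb y hy
    · have h1 : |(q - p).im| ≤ ‖q - p‖ := Complex.abs_im_le_norm _
      have h2 : |q.im| ≤ |(q - p).im| + |p.im| := by
        rw [show q.im = (q - p).im + p.im by simp]
        simpa using abs_add_le (q - p).im p.im
      linarith
    · have := norm_add_le (q - p) p
      rw [sub_add_cancel] at this
      linarith

lemma Ghyp_diff (ap am : ℝ) (hap : 0 < ap) (ham : 0 < am) :
    DifferentiableOn ℂ (Ghyp ap am) (gstrip ap am) := by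
  unfold Ghyp
  exact ((ghyp_diff ap am hap ham).const_mul I).cexp

lemma Ghyp_ne (ap am : ℝ) (z : ℂ) : Ghyp ap am z ≠ 0 := Complex.exp_ne_zero _

lemma Ghyp_norm (ap am : ℝ) (z : ℂ) : ‖Ghyp ap am z‖ = Real.exp (-(ghyp ap am z).im) := by
  rw [Ghyp, Complex.norm_exp]; simp

lemma alphaPar_pos (ap am : ℝ) (hap : 0 < ap) (ham : 0 < am) : 0 < alphaPar ap am := by
  unfold alphaPar; positivity

lemma abs_shift (t g : ℝ) : ∃ e : ℝ, |t + g| = |t| + e ∧ |e| ≤ |g| := by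
  refine ⟨|t + g| - |t|, by ring, ?_⟩
  have := abs_abs_sub_abs_le (t + g) t
  simpa using this

lemma rker_bound (ap am : ℝ) (hap : 0 < ap) (ham : 0 < am) (b₀ : ℂ) (hb0 : 0 < b₀.re)
    (s₀ : ℝ) (hs0 : 0 ≤ s₀) (hs : 2 * s₀ + b₀.re < ap + am) :
    ∃ δ > 0, ∃ C > 0, ∀ b : ℂ, ‖b - b₀‖ < δ → ∀ w : ℂ, |w.im| ≤ s₀ →
      ‖rker ap am b w‖ ≤ C * Real.exp (-(alphaPar ap am / 2 * b.re * |w.re|)) := by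
  set c := alphaPar ap am / 2 with hc
  have hc0 : 0 < c := half_pos (alphaPar_pos ap am hap ham)
  obtain ⟨δ, hδ0, hδ⟩ : ∃ δ > 0, δ ≤ 1 ∧ δ ≤ b₀.re ∧ 2 * s₀ + b₀.re + δ < ap + am := by
    refine ⟨min (min 1 b₀.re) ((ap + am - 2 * s₀ - b₀.re) / 2), ?_, ?_, ?_, ?_⟩
    · exact lt_min (lt_min one_pos hb0) (by linarith)
    · exact (min_le_left _ _).trans (min_le_left _ _)
    · exact (min_le_left _ _).trans (min_le_right _ _)
    · have := min_le_right (min 1 b₀.re) ((ap + am - 2 * s₀ - b₀.re) / 2)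
      linarith
  obtain ⟨hδ1, hδb, hδA⟩ := hδ
  set σ := s₀ + (b₀.re + δ) / 2 with hσ
  obtain ⟨C₀, hC₀⟩ := ghyp_im_bound ap am hap ham σ (by rw [hσ]; linarith)
  simp only [← hc] at hC₀
  refine ⟨δ, hδ0, Real.exp (2 * C₀ + c * ((|b₀.im| + 1) * σ)), Real.exp_pos _, ?_⟩
  intro b hb w hw
  have hre : |(b - b₀).re| < δ := (Complex.abs_re_le_norm _).trans_lt hb
  have him : |(b - b₀).im| < 1 := (Complex.abs_im_le_norm _).trans_lt (hb.trans_le hδ1)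
  rw [Complex.sub_re, abs_lt] at hre
  rw [Complex.sub_im] at him
  have hγ : |b.im| ≤ |b₀.im| + 1 := by
    have := abs_sub_abs_le_abs_sub b.im b₀.im
    linarith
  have hw' := abs_le.1 hw
  have r1 : (w - I * b / 2).re = w.re + b.im / 2 := by simp; ring
  have i1 : (w - I * b / 2).im = w.im - b.re / 2 := by simp
  have r2 : (w + I * b / 2).re = w.re + -(b.im / 2) := by simp; ring
  have i2 : (w + I * b / 2).im = w.im + b.re / 2 := by simp
  have hi1 : |w.im - b.re / 2| ≤ σ := by rw [abs_le]; constructor <;> rw [hσ] <;> linarith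
  have hi2 : |w.im + b.re / 2| ≤ σ := by rw [abs_le]; constructor <;> rw [hσ] <;> linarith
  have B1 := hC₀ (w - I * b / 2) (by rw [i1]; exact hi1)
  have B2 := hC₀ (w + I * b / 2) (by rw [i2]; exact hi2)
  rw [r1, i1] at B1
  rw [r2, i2] at B2
  obtain ⟨e1, he1, he1'⟩ := abs_shift w.re (b.im / 2)
  obtain ⟨e2, he2, he2'⟩ := abs_shift w.re (-(b.im / 2))
  rw [abs_neg] at he2'
  rw [he1] at B1
  rw [he2] at B2
  have hg2 : |b.im / 2| ≤ (|b₀.im| + 1) / 2 := by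
    rw [abs_div, abs_two]; linarith
  have P1 : e1 * (w.im - b.re / 2) ≤ (|b₀.im| + 1) / 2 * σ := by
    refine (le_abs_self _).trans ?_
    rw [abs_mul]
    exact mul_le_mul (he1'.trans hg2) hi1 (abs_nonneg _) (by positivity)
  have P2 : -(e2 * (w.im + b.re / 2)) ≤ (|b₀.im| + 1) / 2 * σ := by
    refine (neg_le_abs _).trans ?_
    rw [abs_mul]
    exact mul_le_mul (he2'.trans hg2) hi2 (abs_nonneg _) (by positivity)
  rw [rker, norm_div, Ghyp_norm, Ghyp_norm, ← Real.exp_sub, ← Real.exp_add]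
  apply Real.exp_le_exp.2
  have B1' := (abs_le.1 B1).1
  have B2' := (abs_le.1 B2).2
  have P1c := mul_le_mul_of_nonneg_left P1 hc0.le
  have P2c := mul_le_mul_of_nonneg_left P2 hc0.le
  nlinarith

lemma sinh_sq_le (x : ℝ) : Real.sinh x ^ 2 ≤ Real.exp (2 * |x|) := by
  rw [← sq_abs, Real.abs_sinh, two_mul, Real.exp_add, ← sq]
  have h0 : 0 ≤ Real.sinh |x| := Real.sinh_nonneg_iff.2 (abs_nonneg x)
  have h1 : Real.sinh |x| ≤ Real.exp |x| := by
    rw [Real.sinh_eq]; linarith [Real.exp_pos |x|, Real.exp_pos (-|x|)]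
  gcongr

lemma wfun_bound (ap am : ℝ) (hap : 0 < ap) (ham : 0 < am) (b₀ : ℂ) (hb0 : 0 < b₀.re)
    (hb1 : b₀.re < ap + am) :
    ∃ δ > 0, ∃ C > 0, ∀ b : ℂ, ‖b - b₀‖ < δ → ∀ t : ℝ,
      ‖wfun ap am b t‖ ≤ C * Real.exp (alphaPar ap am * b.re * |t|) := by
  set c := alphaPar ap am / 2 with hc
  have hc0 : 0 < c := half_pos (alphaPar_pos ap am hap ham)
  obtain ⟨δ, hδ0, hδ1, hδb, hδA⟩ : ∃ δ > 0, δ ≤ 1 ∧ δ < b₀.re ∧ b₀.re + δ < ap + am := by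
    refine ⟨min (min 1 (b₀.re / 2)) ((ap + am - b₀.re) / 2), ?_, ?_, ?_, ?_⟩
    · exact lt_min (lt_min one_pos (by linarith)) (by linarith)
    · exact (min_le_left _ _).trans (min_le_left _ _)
    · have := (min_le_left (min 1 (b₀.re / 2)) ((ap + am - b₀.re) / 2)).trans (min_le_right _ _)
      linarith
    · have := min_le_right (min 1 (b₀.re / 2)) ((ap + am - b₀.re) / 2)
      linarith
  set σ := max ((ap + am) / 2 - (b₀.re - δ)) (b₀.re + δ - (ap + am) / 2) with hσ
  have hσA : 2 * σ < ap + am := by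
    have : σ < (ap + am) / 2 := max_lt (by linarith) (by linarith)
    linarith
  obtain ⟨C₁, hC₁⟩ := ghyp_im_bound ap am hap ham (|am - ap| / 2) (by
    have : |am - ap| < ap + am := by rw [abs_lt]; constructor <;> linarith
    linarith)
  obtain ⟨C₂, hC₂⟩ := ghyp_im_bound ap am hap ham σ hσA
  simp only [← hc] at hC₁ hC₂
  refine ⟨δ, hδ0, 4 * Real.exp (2 * C₁ + 2 * C₂ + 2 * (c * ((|b₀.im| + 1) * σ))), by positivity, ?_⟩
  intro b hb t
  have hre : |(b - b₀).re| < δ := (Complex.abs_re_le_norm _).trans_lt hb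
  have him : |(b - b₀).im| < 1 := (Complex.abs_im_le_norm _).trans_lt (hb.trans_le hδ1)
  rw [Complex.sub_re, abs_lt] at hre
  rw [Complex.sub_im] at him
  have hγ : |b.im| ≤ |b₀.im| + 1 := by
    have := abs_sub_abs_le_abs_sub b.im b₀.im
    linarith
  have num : ∀ s : ℝ, |s| = |t| →
      -(ghyp ap am ((s : ℂ) + I * ((am - ap : ℝ) : ℂ) / 2)).im ≤ C₁ + c * |t| * ((am - ap) / 2) := by
    intro s hs
    have r : ((s : ℂ) + I * ((am - ap : ℝ) : ℂ) / 2).re = s := by simp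
    have i : ((s : ℂ) + I * ((am - ap : ℝ) : ℂ) / 2).im = (am - ap) / 2 := by
      simp
    have B := hC₁ ((s : ℂ) + I * ((am - ap : ℝ) : ℂ) / 2) (by rw [i, abs_div, abs_two])
    rw [r, i, hs] at B
    linarith [(abs_le.1 B).1]
  have den : ∀ s : ℝ, |s| = |t| →
      (ghyp ap am ((s : ℂ) + I * (((ap + am) / 2 : ℝ) : ℂ) - I * b)).im ≤
        C₂ - c * |t| * ((ap + am) / 2 - b.re) + c * ((|b₀.im| + 1) * σ) := by
    intro s hs
    have r : ((s : ℂ) + I * (((ap + am) / 2 : ℝ) : ℂ) - I * b).re = s + b.im := by simp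
    have i : ((s : ℂ) + I * (((ap + am) / 2 : ℝ) : ℂ) - I * b).im = (ap + am) / 2 - b.re := by
      simp
    have hi : |(ap + am) / 2 - b.re| ≤ σ := by
      rw [abs_le]
      have h1 := le_max_left ((ap + am) / 2 - (b₀.re - δ)) (b₀.re + δ - (ap + am) / 2)
      have h2 := le_max_right ((ap + am) / 2 - (b₀.re - δ)) (b₀.re + δ - (ap + am) / 2)
      constructor <;> linarith
    have B := hC₂ ((s : ℂ) + I * (((ap + am) / 2 : ℝ) : ℂ) - I * b) (by rw [i]; exact hi)
    rw [r, i] at B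
    obtain ⟨e, he, he'⟩ := abs_shift s b.im
    rw [he, hs] at B
    have P : -(e * ((ap + am) / 2 - b.re)) ≤ (|b₀.im| + 1) * σ := by
      refine (neg_le_abs _).trans ?_
      rw [abs_mul]
      exact mul_le_mul (he'.trans hγ) hi (abs_nonneg _) (by positivity)
    have Pc := mul_le_mul_of_nonneg_left P hc0.le
    nlinarith [(abs_le.1 B).2]
  have n1 := num t rfl
  have n2 := num (-t) (abs_neg t)
  have d1 := den t rfl
  have d2 := den (-t) (abs_neg t)
  rw [Complex.ofReal_neg] at n2 d2
  rw [wfun, norm_mul, norm_mul, norm_div, norm_div, Ghyp_norm, Ghyp_norm, Ghyp_norm, Ghyp_norm,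
    Complex.norm_real, Real.norm_eq_abs, abs_of_nonneg (by positivity), ← Real.exp_sub,
    ← Real.exp_sub, ← Real.exp_add]
  have hs := sinh_sq_le (Real.pi * t / am)
  refine (mul_le_mul_of_nonneg_right (mul_le_mul_of_nonneg_left hs (by norm_num : (0:ℝ) ≤ 4))
    (Real.exp_pos _).le).trans ?_
  rw [mul_assoc, mul_assoc, ← Real.exp_add, ← Real.exp_add]
  refine mul_le_mul_of_nonneg_left (Real.exp_le_exp.2 ?_) (by norm_num)
  have hx : 2 * |Real.pi * t / am| = 2 * c * ap * |t| := by
    rw [abs_div, abs_mul, abs_of_pos Real.pi_pos, abs_of_pos ham, hc, alphaPar]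
    field_simp
  have hα : alphaPar ap am = 2 * c := by rw [hc]; ring
  rw [hx, hα]
  nlinarith

lemma rker_diffAt (ap am : ℝ) (hap : 0 < ap) (ham : 0 < am) (q : ℂ × ℂ) (hb0 : 0 < q.1.re)
    (hs : 2 * |q.2.im| + q.1.re < ap + am) :
    DifferentiableAt ℂ (fun q : ℂ × ℂ => rker ap am q.1 q.2) q := by
  have key : ∀ z ∈ gstrip ap am, DifferentiableAt ℂ (Ghyp ap am) z := fun z hz =>
    (Ghyp_diff ap am hap ham z hz).differentiableAt ((gstrip_open ap am).mem_nhds hz)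
  have h := abs_le.1 (le_refl |q.2.im|)
  have i1 : (q.2 - I * q.1 / 2).im = q.2.im - q.1.re / 2 := by simp
  have i2 : (q.2 + I * q.1 / 2).im = q.2.im + q.1.re / 2 := by simp
  have h1 : q.2 - I * q.1 / 2 ∈ gstrip ap am := by
    simp only [gstrip, Set.mem_ofPred_eq]
    rw [i1]
    have : |q.2.im - q.1.re / 2| < (ap + am) / 2 := by rw [abs_lt]; constructor <;> linarith
    linarith
  have h2 : q.2 + I * q.1 / 2 ∈ gstrip ap am := by
    simp only [gstrip, Set.mem_ofPred_eq]
    rw [i2]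
    have : |q.2.im + q.1.re / 2| < (ap + am) / 2 := by rw [abs_lt]; constructor <;> linarith
    linarith
  unfold rker
  have e1 : DifferentiableAt ℂ (fun q : ℂ × ℂ => Ghyp ap am (q.2 - I * q.1 / 2)) q :=
    (key _ h1).comp q (f := fun q : ℂ × ℂ => q.2 - I * q.1 / 2) (by fun_prop)
  have e2 : DifferentiableAt ℂ (fun q : ℂ × ℂ => Ghyp ap am (q.2 + I * q.1 / 2)) q :=
    (key _ h2).comp q (f := fun q : ℂ × ℂ => q.2 + I * q.1 / 2) (by fun_prop)
  simp only [div_eq_mul_inv _ (Ghyp _ _ _)]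
  exact e1.fun_mul (e2.fun_inv (Ghyp_ne _ _ _))

lemma wden_mem (ap am : ℝ) (b : ℂ) (hb0 : 0 < b.re) (hb1 : b.re < ap + am) (s : ℂ) (hs : s.im = 0) :
    s + I * (((ap + am) / 2 : ℝ) : ℂ) - I * b ∈ gstrip ap am := by
  simp only [gstrip, Set.mem_ofPred_eq]
  have i : (s + I * (((ap + am) / 2 : ℝ) : ℂ) - I * b).im = (ap + am) / 2 - b.re := by
    simp [hs]
  rw [i]
  have : |(ap + am) / 2 - b.re| < (ap + am) / 2 := by rw [abs_lt]; constructor <;> linarith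
  linarith

lemma wnum_mem (ap am : ℝ) (hap : 0 < ap) (ham : 0 < am) (s : ℂ) (hs : s.im = 0) :
    s + I * ((am - ap : ℝ) : ℂ) / 2 ∈ gstrip ap am := by
  simp only [gstrip, Set.mem_ofPred_eq]
  have i : (s + I * ((am - ap : ℝ) : ℂ) / 2).im = (am - ap) / 2 := by simp [hs]
  rw [i]
  have : |(am - ap) / 2| < (ap + am) / 2 := by rw [abs_lt]; constructor <;> linarith
  linarith

lemma wfun_diffAt (ap am : ℝ) (hap : 0 < ap) (ham : 0 < am) (b : ℂ) (hb0 : 0 < b.re)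
    (hb1 : b.re < ap + am) (t : ℝ) : DifferentiableAt ℂ (fun b => wfun ap am b t) b := by
  have key : ∀ z ∈ gstrip ap am, DifferentiableAt ℂ (Ghyp ap am) z := fun z hz =>
    (Ghyp_diff ap am hap ham z hz).differentiableAt ((gstrip_open ap am).mem_nhds hz)
  unfold wfun
  have hd : ∀ s : ℂ, s.im = 0 → DifferentiableAt ℂ (fun b => Ghyp ap am
      (s + I * (((ap + am) / 2 : ℝ) : ℂ) - I * b)) b := fun s hs =>
    (key _ (wden_mem ap am b hb0 hb1 s hs)).comp b
      (f := fun b => s + I * (((ap + am) / 2 : ℝ) : ℂ) - I * b) (by fun_prop)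
  refine DifferentiableAt.const_mul (DifferentiableAt.fun_mul ?_ ?_) _
  · exact (differentiableAt_const _).fun_div (hd _ (by simp)) (Ghyp_ne _ _ _)
  · exact (differentiableAt_const _).fun_div (hd _ (by simp)) (Ghyp_ne _ _ _)

lemma wfun_cont (ap am : ℝ) (hap : 0 < ap) (ham : 0 < am) (b : ℂ) (hb0 : 0 < b.re)
    (hb1 : b.re < ap + am) : Continuous (fun t => wfun ap am b t) := by
  have key : ∀ f : ℝ → ℂ, Continuous f → (∀ t, f t ∈ gstrip ap am) →
      Continuous (fun t => Ghyp ap am (f t)) := fun f hf hm =>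
    (Ghyp_diff ap am hap ham).continuousOn.comp_continuous hf hm
  unfold wfun
  refine Continuous.mul (by fun_prop) (Continuous.mul ?_ ?_)
  · refine Continuous.div ?_ ?_ (fun _ => Ghyp_ne _ _ _)
    · exact key _ (by fun_prop) fun t => wnum_mem ap am hap ham _ (by simp)
    · exact key _ (by fun_prop) fun t => wden_mem ap am b hb0 hb1 _ (by simp)
  · refine Continuous.div ?_ ?_ (fun _ => Ghyp_ne _ _ _)
    · exact key _ (by fun_prop) fun t => wnum_mem ap am hap ham _ (by simp)
    · exact key _ (by fun_prop) fun t => wden_mem ap am b hb0 hb1 _ (by simp)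

lemma rker_cont (ap am : ℝ) (hap : 0 < ap) (ham : 0 < am) (b x : ℂ) (hb0 : 0 < b.re)
    (hs : 2 * |x.im| + b.re < ap + am) : Continuous (fun t : ℝ => rker ap am b (x - t)) := by
  rw [continuous_iff_continuousAt]
  intro t
  have := (rker_diffAt ap am hap ham (b, x - t) hb0 (by simpa using hs)).continuousAt
  exact ContinuousAt.comp (f := fun t : ℝ => (b, x - (t : ℂ))) this (by fun_prop)

lemma abs_ind (s t u : ℝ) : ((Set.Ici s).indicator 1 u - (Set.Ici t).indicator 1 u : ℝ) ^ 2 =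
    (Set.Ico (min s t) (max s t)).indicator 1 u := by
  simp only [Set.indicator_apply, Set.mem_Ici, Set.mem_Ico, Pi.one_apply, min_le_iff, lt_max_iff]
  by_cases h1 : s ≤ u <;> by_cases h2 : t ≤ u <;> simp [h1, h2, not_lt, not_le] <;> grind

lemma abs_ind_int (s t : ℝ) :
    Integrable (fun u : ℝ => ((Set.Ici s).indicator 1 u - (Set.Ici t).indicator 1 u : ℝ) ^ 2) ∧
    ∫ u : ℝ, ((Set.Ici s).indicator 1 u - (Set.Ici t).indicator 1 u : ℝ) ^ 2 = |s - t| := by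
  simp only [abs_ind]
  constructor
  · rw [integrable_indicator_iff measurableSet_Ico]
    exact (integrableOn_const_iff (C := (1:ℝ))).2 (Or.inr (by simp))
  · rw [integral_indicator_one measurableSet_Ico]
    simp [Measure.real, max_sub_min_eq_abs', abs_sub_comm]

lemma sum_sq_id (n m : ℕ) (P : Fin n → ℝ) (Q : Fin m → ℝ) (hP : ∀ i, P i ^ 2 = P i)
    (hQ : ∀ i, Q i ^ 2 = Q i) :
    ∑ i, ∑ j, (P i - Q j) ^ 2 = m * (∑ i, P i) + n * (∑ j, Q j) - 2 * (∑ i, P i) * (∑ j, Q j) := by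
  simp only [sub_sq, hP, hQ, Finset.sum_add_distrib, Finset.sum_sub_distrib, Finset.sum_const,
    Finset.card_univ, Fintype.card_fin, nsmul_eq_mul, ← Finset.mul_sum, ← Finset.sum_mul]
  ring

lemma abs_sum_int (n m : ℕ) (x : Fin n → ℝ) (z : Fin m → ℝ) :
    Integrable (fun u : ℝ => ∑ i, ∑ j,
      ((Set.Ici (x i)).indicator 1 u - (Set.Ici (z j)).indicator 1 u : ℝ) ^ 2) ∧
    ∫ u : ℝ, ∑ i, ∑ j, ((Set.Ici (x i)).indicator 1 u - (Set.Ici (z j)).indicator 1 u : ℝ) ^ 2 =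
      ∑ i, ∑ j, |x i - z j| := by
  constructor
  · exact integrable_finsetSum _ fun i _ => integrable_finsetSum _ fun j _ => (abs_ind_int _ _).1
  · rw [integral_finsetSum _ fun i _ => integrable_finsetSum _ fun j _ => (abs_ind_int _ _).1]
    refine Finset.sum_congr rfl fun i _ => ?_
    rw [integral_finsetSum _ fun j _ => (abs_ind_int _ _).1]
    exact Finset.sum_congr rfl fun j _ => (abs_ind_int _ _).2

lemma comb1 (M : ℕ) (x : Fin (M + 2) → ℝ) (z : Fin (M + 1) → ℝ) :
    (∑ i, ∑ j, |z i - z j|) + (∑ i, ∑ j, |x i - x j|) ≤ 2 * ∑ i, ∑ j, |x i - z j| := by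
  rw [← (abs_sum_int _ _ z z).2, ← (abs_sum_int _ _ x x).2, ← (abs_sum_int _ _ x z).2,
    ← integral_const_mul, ← integral_add (abs_sum_int _ _ z z).1 (abs_sum_int _ _ x x).1]
  refine integral_mono ((abs_sum_int _ _ z z).1.add (abs_sum_int _ _ x x).1)
    ((abs_sum_int _ _ x z).1.const_mul 2) fun u => ?_
  have h01 : ∀ s : ℝ, ((Set.Ici s).indicator 1 u : ℝ) ^ 2 = (Set.Ici s).indicator 1 u := by
    intro s
    simp only [Set.indicator_apply, Pi.one_apply]; split_ifs <;> simp
  have hnat : ∀ s : ℝ, ∃ n : ℤ, ((Set.Ici s).indicator 1 u : ℝ) = n := by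
    intro s
    simp only [Set.indicator_apply, Pi.one_apply]
    split_ifs
    · exact ⟨1, by simp⟩
    · exact ⟨0, by simp⟩
  choose ν hν using hnat
  have e1 := sum_sq_id _ _ (fun i => (Set.Ici (z i)).indicator 1 u)
    (fun i => (Set.Ici (z i)).indicator 1 u) (fun i => h01 _) (fun i => h01 _)
  have e2 := sum_sq_id _ _ (fun i => (Set.Ici (x i)).indicator 1 u)
    (fun i => (Set.Ici (x i)).indicator 1 u) (fun i => h01 _) (fun i => h01 _)
  have e3 := sum_sq_id _ _ (fun i => (Set.Ici (x i)).indicator 1 u)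
    (fun i => (Set.Ici (z i)).indicator 1 u) (fun i => h01 _) (fun i => h01 _)
  simp only [hν] at e1 e2 e3
  simp only [hν]
  rw [e1, e2, e3, ← Int.cast_sum, ← Int.cast_sum]
  have key : ∀ k : ℤ, 0 ≤ (k * (k - 1)) := by
    intro k
    rcases le_or_gt k 0 with h | h
    · nlinarith
    · have : 1 ≤ k := h
      nlinarith
  have k := key (∑ i, ν (x i) - ∑ i, ν (z i))
  have k' : (0:ℝ) ≤ (((∑ i, ν (x i)) - ∑ i, ν (z i) : ℤ) : ℝ) * ((((∑ i, ν (x i)) - ∑ i, ν (z i) : ℤ) : ℝ) - 1) := by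
    exact_mod_cast k
  rw [Int.cast_sub] at k'
  push_cast at k' ⊢
  nlinarith

/-- bounds in terms of the deviation from the zeroth coordinate -/
lemma comb2 (M : ℕ) (x : Fin (M + 2) → ℝ) (z : Fin (M + 1) → ℝ) :
    (∑ i, ∑ j, |z i - z j|) ≤ 2 * (M + 1) * ∑ k, |z k - x 0| := by
  have : ∀ i j, |z i - z j| ≤ |z i - x 0| + |z j - x 0| := fun i j => by
    rw [abs_sub_comm (z j)]; exact abs_sub_le _ _ _
  refine (Finset.sum_le_sum fun i _ => Finset.sum_le_sum fun j _ => this i j).trans ?_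
  simp only [Finset.sum_add_distrib, Finset.sum_const, Finset.card_univ, Fintype.card_fin,
    nsmul_eq_mul, ← Finset.mul_sum]
  push_cast
  apply le_of_eq; ring

lemma comb2' (M : ℕ) (x : Fin (M + 2) → ℝ) (z : Fin (M + 1) → ℝ) :
    (∑ i, ∑ j, |z i - z j|) ≤ 2 * M * ∑ k, |z k - x 0| := by
  have : ∀ i j, |z i - z j| ≤ |z i - x 0| + |z j - x 0| - if i = j then 2 * |z i - x 0| else 0 :=
    fun i j => by
      split_ifs with h
      · subst h; simp; linarith
      · rw [abs_sub_comm (z j), sub_zero]; exact abs_sub_le _ _ _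
  refine (Finset.sum_le_sum fun i _ => Finset.sum_le_sum fun j _ => this i j).trans ?_
  simp only [Finset.sum_add_distrib, Finset.sum_sub_distrib, Finset.sum_const, Finset.card_univ,
    Fintype.card_fin, nsmul_eq_mul, ← Finset.mul_sum, Finset.sum_ite_eq, Finset.mem_univ, if_true]
  push_cast
  apply le_of_eq; ring

lemma comb3 (M : ℕ) (x : Fin (M + 2) → ℝ) :
    2 * (∑ j, |x j - x 0|) ≤ ∑ i, ∑ j, |x i - x j| := by
  have h1 : ∑ i, ∑ j, |x i - x j| = ∑ i, (|x i - x 0| + ∑ j : Fin (M + 1), |x i - x j.succ|) := by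
    refine Finset.sum_congr rfl fun i _ => Fin.sum_univ_succ _
  rw [h1, Finset.sum_add_distrib, Fin.sum_univ_succ (fun i => ∑ j : Fin (M + 1), |x i - x j.succ|)]
  have h2 : ∑ j : Fin (M + 1), |x 0 - x j.succ| = ∑ j, |x j - x 0| := by
    rw [Fin.sum_univ_succ (fun j => |x j - x 0|)]
    simp [abs_sub_comm]
  have h3 : 0 ≤ ∑ i : Fin (M + 1), ∑ j : Fin (M + 1), |x i.succ - x j.succ| :=
    Finset.sum_nonneg fun i _ => Finset.sum_nonneg fun j _ => abs_nonneg _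
  linarith

lemma comb4 (M : ℕ) (x : Fin (M + 2) → ℝ) (z : Fin (M + 1) → ℝ) :
    (M + 2) * (∑ k, |z k - x 0|) - (M + 1) * (∑ j, |x j - x 0|) ≤ ∑ i, ∑ j, |x i - z j| := by
  have : ∀ i j, |z j - x 0| - |x i - x 0| ≤ |x i - z j| := fun i j => by
    have := abs_sub_abs_le_abs_sub (z j - x 0) (x i - x 0)
    rw [abs_sub_comm (x i) (z j)]
    simpa using this
  refine le_trans ?_ (Finset.sum_le_sum fun i _ => Finset.sum_le_sum fun j _ => this i j)
  simp only [Finset.sum_sub_distrib, Finset.sum_const, Finset.card_univ,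
    Fintype.card_fin, nsmul_eq_mul, ← Finset.mul_sum]
  push_cast
  apply le_of_eq; ring

lemma comb5 (M : ℕ) (x : Fin (M + 2) → ℝ) (z : Fin (M + 1) → ℝ) :
    ∑ i, ∑ j, |x i - z j| ≤ (M + 2) * (∑ k, |z k - x 0|) + (M + 1) * (∑ j, |x j - x 0|) := by
  have : ∀ i j, |x i - z j| ≤ |z j - x 0| + |x i - x 0| := fun i j => by
    rw [add_comm, abs_sub_comm (z j)]; exact abs_sub_le _ _ _
  refine (Finset.sum_le_sum fun i _ => Finset.sum_le_sum fun j _ => this i j).trans ?_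
  simp only [Finset.sum_add_distrib, Finset.sum_const, Finset.card_univ,
    Fintype.card_fin, nsmul_eq_mul, ← Finset.mul_sum]
  push_cast
  apply le_of_eq; ring

lemma half_sum (n : ℕ) (z : Fin n → ℝ) :
    2 * ∑ q ∈ Finset.univ.filter (fun q : Fin n × Fin n => q.1 < q.2), |z q.1 - z q.2| =
      ∑ i, ∑ j, |z i - z j| := by
  rw [← Fintype.sum_prod_type' (fun i j => |z i - z j|),
    ← Finset.sum_filter_add_sum_filter_not Finset.univ (fun q : Fin n × Fin n => q.1 < q.2), two_mul]
  congr 1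
  have h : ∑ q ∈ Finset.univ.filter (fun q : Fin n × Fin n => q.1 < q.2), |z q.1 - z q.2| =
      ∑ q ∈ Finset.univ.filter (fun q : Fin n × Fin n => q.2 < q.1), |z q.1 - z q.2| := by
    refine Finset.sum_nbij' Prod.swap Prod.swap ?_ ?_ ?_ ?_ ?_ <;> simp [abs_sub_comm]
  rw [h]
  refine Finset.sum_subset ?_ ?_
  · intro q; simp only [Finset.mem_filter, Finset.mem_univ, true_and]; exact fun h => not_lt.2 h.le
  · intro q; simp only [Finset.mem_filter, Finset.mem_univ, true_and, not_lt]
    intro h1 h2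
    rw [le_antisymm h2 h1]; simp

noncomputable def Bsum (n : ℕ) (x : Fin n → ℝ) : ℝ :=
  ∑ q ∈ Finset.univ.filter (fun q : Fin n × Fin n => q.1 < q.2), |x q.1 - x q.2|

noncomputable def Fint (ap am : ℝ) (M : ℕ) (y : Fin (M + 2) → ℝ) (b : ℂ) (x : Fin (M + 2) → ℂ)
    (z : Fin (M + 1) → ℝ) : ℂ :=
  (∏ q ∈ Finset.univ.filter (fun q : Fin (M + 1) × Fin (M + 1) => q.1 < q.2),
    wfun ap am b (z q.1 - z q.2)) *
  (∏ j : Fin (M + 2), ∏ k : Fin (M + 1), rker ap am b (x j - (z k : ℂ))) *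
  Jrec ap am b (M + 1) z (fun j => y (Fin.castSucc j) - y (Fin.last (M + 1)))

lemma comb_all (M : ℕ) (x : Fin (M + 2) → ℝ) (z : Fin (M + 1) → ℝ) :
    Bsum _ z + Bsum _ x ≤ ∑ i, ∑ j, |x i - z j| ∧
    2 * (∑ k, |z k - x 0|) - (M + 2) * Bsum _ x ≤ (∑ i, ∑ j, |x i - z j|) - Bsum _ z - Bsum _ x ∧
    Bsum _ z ≤ (M + 1) * (∑ k, |z k - x 0|) ∧
    ∑ i, ∑ j, |x i - z j| ≤ (M + 1) * Bsum _ x + (M + 2) * (∑ k, |z k - x 0|) := by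
  have hz : 2 * Bsum _ z = _ := half_sum _ z
  have hx : 2 * Bsum _ x = _ := half_sum _ x
  have h1 := comb1 M x z
  have h2 := comb2 M x z
  have h2' := comb2' M x z
  have h3 := comb3 M x
  have h4 := comb4 M x z
  have h5 := comb5 M x z
  rw [← hz] at h1 h2 h2'
  rw [← hx] at h1 h3
  have hM : (0:ℝ) ≤ M + 1 := by positivity
  have h3' : (∑ j, |x j - x 0|) ≤ Bsum _ x := by linarith
  have h6 := mul_le_mul_of_nonneg_left h3' hM
  refine ⟨by linarith, by linarith, by linarith, by linarith⟩

lemma params (c β ε : ℝ) (hc : 0 < c) (hβ : 0 < β) (hε : 0 < ε) (M : ℕ) :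
    ∃ η > 0, ∃ κ > 0, ∀ (x : Fin (M + 2) → ℝ) (z : Fin (M + 1) → ℝ) (b' : ℝ), |b' - β| ≤ η →
      2 * c * b' * Bsum _ z - c * b' * (∑ i, ∑ j, |x i - z j|) - (c * β - η) * Bsum _ z ≤
        -(c * β - ε) * Bsum _ x - κ * ∑ k, |z k - x 0| := by
  obtain ⟨θ, hθ0, hθ1, hθ⟩ : ∃ θ > 0, θ ≤ 1 ∧ c * β * θ * (M + 2) ≤ ε / 2 := by
    refine ⟨min 1 (ε / (2 * c * β * (M + 2))), lt_min one_pos (by positivity), min_le_left _ _, ?_⟩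
    have := min_le_right 1 (ε / (2 * c * β * (M + 2)))
    rw [le_div_iff₀ (by positivity)] at this
    linarith
  set K : ℝ := (2 * c + 1) * (M + 1) + c * (M + 2) with hK
  have hK0 : 0 < K := by positivity
  obtain ⟨η, hη0, hη1, hη2⟩ : ∃ η > 0, c * η * (M + 1) ≤ ε / 2 ∧ η * K ≤ c * β * θ := by
    refine ⟨min (ε / (2 * c * (M + 1))) (c * β * θ / K), lt_min (by positivity) (by positivity), ?_, ?_⟩
    · have := min_le_left (ε / (2 * c * (M + 1))) (c * β * θ / K)
      rw [le_div_iff₀ (by positivity)] at this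
      linarith
    · have := min_le_right (ε / (2 * c * (M + 1))) (c * β * θ / K)
      rw [le_div_iff₀ (by positivity)] at this
      linarith
  refine ⟨η, hη0, c * β * θ, by positivity, ?_⟩
  intro x z b' hb'
  obtain ⟨h1, h2, h3, h4⟩ := comb_all M x z
  have hA : 0 ≤ Bsum _ z := Finset.sum_nonneg fun _ _ => abs_nonneg _
  have hB : 0 ≤ Bsum _ x := Finset.sum_nonneg fun _ _ => abs_nonneg _
  have hC : 0 ≤ ∑ i, ∑ j, |x i - z j| :=
    Finset.sum_nonneg fun _ _ => Finset.sum_nonneg fun _ _ => abs_nonneg _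
  have hU : 0 ≤ ∑ k, |z k - x 0| := Finset.sum_nonneg fun _ _ => abs_nonneg _
  generalize Bsum _ z = A at *
  generalize Bsum _ x = B at *
  generalize ∑ i, ∑ j, |x i - z j| = C at *
  generalize ∑ k, |z k - x 0| = U at *
  have hb := abs_le.1 hb'
  have t1 : c * b' * A ≤ c * (β + η) * A := by gcongr; linarith
  have t2 : c * (β - η) * C ≤ c * b' * C := by gcongr; linarith
  have t3 : θ * (2 * U - (M + 2) * B) ≤ C - A - B := by
    have : θ * (2 * U - (M + 2) * B) ≤ θ * (C - A - B) := by gcongr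
    have : θ * (C - A - B) ≤ 1 * (C - A - B) := by
      apply mul_le_mul_of_nonneg_right hθ1; linarith
    linarith
  have t4 := mul_le_mul_of_nonneg_left t3 (by positivity : 0 ≤ c * β)
  have t5 := mul_le_mul_of_nonneg_left h3 (by positivity : 0 ≤ η * (2 * c + 1))
  have t6 := mul_le_mul_of_nonneg_left h4 (by positivity : 0 ≤ c * η)
  have t7 := mul_le_mul_of_nonneg_right hθ hB
  have t8 := mul_le_mul_of_nonneg_right hη1 hB
  have t9 := mul_le_mul_of_nonneg_right hη2 hU
  rw [hK] at t9
  nlinarith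

def JB (ap am : ℝ) (M : ℕ) : Prop :=
  ∀ (y : Fin (M + 1) → ℝ) (b₀ : ℂ), 0 < b₀.re → b₀.re < ap + am → ∀ ε > 0, ∃ δ > 0, ∃ C > 0,
    ∀ b : ℂ, ‖b - b₀‖ < δ → ∀ x : Fin (M + 1) → ℝ,
      ‖Jrec ap am b (M + 1) x y‖ ≤
        C * Real.exp (-(alphaPar ap am / 2 * b₀.re - ε) * Bsum _ x)

lemma prod_exp_bound {ι : Type*} (s : Finset ι) (f : ι → ℂ) (C : ℝ) (g : ι → ℝ)
    (h : ∀ i ∈ s, ‖f i‖ ≤ C * Real.exp (g i)) :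
    ‖∏ i ∈ s, f i‖ ≤ C ^ s.card * Real.exp (∑ i ∈ s, g i) := by
  rw [norm_prod, Real.exp_sum, ← Finset.prod_const, ← Finset.prod_mul_distrib]
  exact Finset.prod_le_prod (fun i _ => norm_nonneg _) h

lemma exp_three (a b c u v w : ℝ) : a * Real.exp u * (b * Real.exp v) * (c * Real.exp w) =
    a * b * c * Real.exp (u + v + w) := by
  rw [Real.exp_add, Real.exp_add]; ring

lemma step_bound (ap am : ℝ) (hap : 0 < ap) (ham : 0 < am) (M : ℕ) (hJ : JB ap am M)
    (y : Fin (M + 2) → ℝ) (b₀ : ℂ) (hb0 : 0 < b₀.re) (s₀ : ℝ) (hs0 : 0 ≤ s₀)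
    (hs : 2 * s₀ + b₀.re < ap + am) (ε : ℝ) (hε : 0 < ε) :
    ∃ δ > 0, ∃ κ > 0, ∃ C > 0, ∀ b : ℂ, ‖b - b₀‖ < δ → ∀ x : Fin (M + 2) → ℂ,
      (∀ j, |(x j).im| ≤ s₀) → ∀ z : Fin (M + 1) → ℝ,
      ‖Fint ap am M y b x z‖ ≤
        C * Real.exp (-(alphaPar ap am / 2 * b₀.re - ε) * Bsum _ (fun j => (x j).re)) *
          Real.exp (-κ * ∑ k, |z k - (x 0).re|) := by
  have hα := alphaPar_pos ap am hap ham
  obtain ⟨η, hη, κ, hκ, hpar⟩ := params (alphaPar ap am / 2) b₀.re ε (half_pos hα) hb0 hε M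
  obtain ⟨δ1, hδ1, C1, hC1, h1⟩ := rker_bound ap am hap ham b₀ hb0 s₀ hs0 hs
  obtain ⟨δ2, hδ2, C2, hC2, h2⟩ := wfun_bound ap am hap ham b₀ hb0 (by linarith)
  obtain ⟨δ3, hδ3, C3, hC3, h3⟩ := hJ (fun j => y (Fin.castSucc j) - y (Fin.last (M + 1))) b₀ hb0
    (by linarith) η hη
  set n := (Finset.univ.filter (fun q : Fin (M + 1) × Fin (M + 1) => q.1 < q.2)).card with hn
  set m := (Finset.univ : Finset (Fin (M + 2) × Fin (M + 1))).card with hm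
  refine ⟨min (min δ1 δ2) (min δ3 η), by positivity, κ, hκ, C2 ^ n * C1 ^ m * C3, by positivity, ?_⟩
  intro b hb x hx z
  have hb1 := hb.trans_le ((min_le_left _ _).trans (min_le_left _ _))
  have hb2 := hb.trans_le ((min_le_left _ _).trans (min_le_right _ _))
  have hb3 := hb.trans_le ((min_le_right _ _).trans (min_le_left _ _))
  have hb4 := hb.trans_le ((min_le_right _ _).trans (min_le_right _ _))
  have e1 := prod_exp_bound (Finset.univ.filter (fun q : Fin (M + 1) × Fin (M + 1) => q.1 < q.2))
    (fun q => wfun ap am b (z q.1 - z q.2)) C2 (fun q => alphaPar ap am * b.re * |z q.1 - z q.2|)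
    (fun q _ => h2 b hb2 _)
  have e2 := prod_exp_bound (Finset.univ : Finset (Fin (M + 2) × Fin (M + 1)))
    (fun q => rker ap am b (x q.1 - (z q.2 : ℂ))) C1
    (fun q => -(alphaPar ap am / 2 * b.re * |(x q.1).re - z q.2|))
    (fun q _ => by
      have := h1 b hb1 (x q.1 - (z q.2 : ℂ)) (by simpa using hx q.1)
      simpa using this)
  have e3 := h3 b hb3 z
  rw [Fintype.prod_prod_type, Fintype.sum_prod_type] at e2
  have hbr : |b.re - b₀.re| ≤ η := by
    rw [← Complex.sub_re]; exact (Complex.abs_re_le_norm _).trans hb4.le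
  have hp := hpar (fun j => (x j).re) z b.re hbr
  rw [Fint, norm_mul, norm_mul]
  refine (mul_le_mul (mul_le_mul e1 e2 (norm_nonneg _) (by positivity)) e3 (norm_nonneg _)
    (by positivity)).trans ?_
  rw [← hn, ← hm, exp_three, mul_assoc _ (Real.exp _) (Real.exp _), ← Real.exp_add]
  refine mul_le_mul_of_nonneg_left (Real.exp_le_exp.2 ?_) (by positivity)
  rw [← Finset.mul_sum]
  simp only [Finset.sum_neg_distrib, ← Finset.mul_sum]
  change alphaPar ap am * b.re * Bsum _ z + _ + _ ≤ _
  linarith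

lemma int_exp_prod (n : ℕ) (κ : ℝ) (hκ : 0 < κ) (t : ℝ) :
    Integrable (fun z : Fin n → ℝ => Real.exp (-κ * ∑ k, |z k - t|)) ∧
    ∫ z : Fin n → ℝ, Real.exp (-κ * ∑ k, |z k - t|) =
      ∫ z : Fin n → ℝ, Real.exp (-κ * ∑ k, |z k|) := by
  have h1 : Integrable (fun u : ℝ => Real.exp (-κ * |u|)) := by
    rw [← integrableOn_univ, ← Set.Iic_union_Ioi (a := (0:ℝ)), integrableOn_union]
    constructor
    · refine (integrableOn_exp_mul_Iic hκ 0).congr_fun (fun u hu => ?_) measurableSet_Iic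
      simp only
      rw [abs_of_nonpos hu]; ring_nf
    · refine (integrableOn_exp_mul_Ioi (neg_neg_of_pos hκ) 0).congr_fun (fun u hu => ?_)
        measurableSet_Ioi
      simp only
      rw [abs_of_pos hu]
  have h2 : Integrable (fun z : Fin n → ℝ => Real.exp (-κ * ∑ k, |z k|)) := by
    have := Integrable.fintype_prod (ι := Fin n) (f := fun _ (u : ℝ) => Real.exp (-κ * |u|))
      (fun _ => h1)
    simp only [← Real.exp_sum, ← Finset.mul_sum] at this
    exact this
  constructor
  · exact h2.comp_sub_right (fun _ => t)
  · exact integral_sub_right_eq_self (μ := volume) (fun z : Fin n → ℝ => Real.exp (-κ * ∑ k, |z k|)) (fun _ => t)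

lemma Jrec_eq (ap am : ℝ) (M : ℕ) (b : ℂ) (x y : Fin (M + 2) → ℝ) :
    Jrec ap am b (M + 2) x y =
      (Complex.exp (Complex.I * (alphaPar ap am : ℂ) * (y (Fin.last (M + 1)) : ℂ) *
          ∑ j : Fin (M + 2), (x j : ℂ)) / (Nat.factorial (M + 1) : ℂ)) *
        ∫ z : Fin (M + 1) → ℝ, Fint ap am M y b (fun j => (x j : ℂ)) z := by
  rw [Jrec]; rfl

lemma JB_all (ap am : ℝ) (hap : 0 < ap) (ham : 0 < am) (M : ℕ) : JB ap am M := by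
  induction M with
  | zero =>
    intro y b₀ _ _ ε _
    refine ⟨1, one_pos, 1, one_pos, ?_⟩
    intro b _ x
    rw [Jrec, Complex.norm_exp]
    have : Bsum (0 + 1) x = 0 := by
      rw [Bsum]
      refine Finset.sum_eq_zero fun q _ => ?_
      have hq : q.1 = q.2 := Fin.ext (by have := q.1.2; have := q.2.2; omega)
      rw [hq]; simp
    rw [this]
    have h : (I * (alphaPar ap am : ℂ) * (x 0 : ℂ) * (y 0 : ℂ)).re = 0 := by
      simp
    rw [h]; simp
  | succ M ih =>
    intro y b₀ hb0 hb1 ε hε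
    obtain ⟨δ, hδ, κ, hκ, C, hC, h⟩ := step_bound ap am hap ham M ih y b₀ hb0 0 le_rfl
      (by linarith) ε hε
    refine ⟨δ, hδ, C * ((∫ z : Fin (M + 1) → ℝ, Real.exp (-κ * ∑ k, |z k|)) + 1), ?_, ?_⟩
    · have : 0 ≤ ∫ z : Fin (M + 1) → ℝ, Real.exp (-κ * ∑ k, |z k|) :=
        integral_nonneg fun z => (Real.exp_pos _).le
      positivity
    intro b hb x
    rw [Jrec_eq, norm_mul, norm_div, Complex.norm_exp]
    have h0 : (I * (alphaPar ap am : ℂ) * (y (Fin.last (M + 1)) : ℂ) * ∑ j, (x j : ℂ)).re = 0 := by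
      rw [← Complex.ofReal_sum]; simp
    rw [h0, Real.exp_zero]
    have hf : 1 / ‖(Nat.factorial (M + 1) : ℂ)‖ ≤ 1 := by
      rw [Complex.norm_natCast]
      have : (1:ℝ) ≤ Nat.factorial (M + 1) := by exact_mod_cast Nat.one_le_iff_ne_zero.2 (Nat.factorial_ne_zero _)
      rw [div_le_one (by linarith)]; exact this
    have hi : ‖∫ z : Fin (M + 1) → ℝ, Fint ap am M y b (fun j => (x j : ℂ)) z‖ ≤
        C * Real.exp (-(alphaPar ap am / 2 * b₀.re - ε) * Bsum _ x) *
          ∫ z : Fin (M + 1) → ℝ, Real.exp (-κ * ∑ k, |z k|) := by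
      rw [← (int_exp_prod _ κ hκ (x 0)).2, ← integral_const_mul]
      refine norm_integral_le_of_norm_le ((int_exp_prod _ κ hκ (x 0)).1.const_mul _) ?_
      refine Filter.Eventually.of_forall fun z => ?_
      have := h b hb (fun j => (x j : ℂ)) (by simp) z
      simpa using this
    refine (mul_le_mul hf hi (norm_nonneg _) zero_le_one).trans ?_
    have hp : 0 < C * Real.exp (-(alphaPar ap am / 2 * b₀.re - ε) * Bsum _ x) := by positivity
    nlinarith

def U0 (ap am : ℝ) (M : ℕ) : Set (ℂ × (Fin (M + 2) → ℂ)) :=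
  {p | 0 < p.1.re ∧ ∀ j, 2 * |(p.2 j).im| + p.1.re < ap + am}

noncomputable def F0 (ap am : ℝ) (M : ℕ) (y : Fin (M + 2) → ℝ) (p : ℂ × (Fin (M + 2) → ℂ)) : ℂ :=
  (Complex.exp (Complex.I * (alphaPar ap am : ℂ) * (y (Fin.last (M + 1)) : ℂ) *
      ∑ j : Fin (M + 2), p.2 j) / (Nat.factorial (M + 1) : ℂ)) *
    ∫ z : Fin (M + 1) → ℝ, Fint ap am M y p.1 p.2 z

lemma U0_open (ap am : ℝ) (M : ℕ) : IsOpen (U0 ap am M) := by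
  have : U0 ap am M = {p | 0 < p.1.re} ∩ ⋂ j, {p | 2 * |(p.2 j).im| + p.1.re < ap + am} := by
    ext p; simp [U0]
  rw [this]
  refine IsOpen.inter (isOpen_lt (by fun_prop) (by fun_prop)) (isOpen_iInter_of_finite fun j => ?_)
  exact isOpen_lt (by fun_prop) (by fun_prop)

def JC (ap am : ℝ) (M : ℕ) : Prop :=
  ∀ (y : Fin (M + 1) → ℝ),
    (∀ b : ℂ, 0 < b.re → b.re < ap + am → Continuous (fun x => Jrec ap am b (M + 1) x y)) ∧
    ∀ x, ∀ b : ℂ, 0 < b.re → b.re < ap + am →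
      DifferentiableAt ℂ (fun b => Jrec ap am b (M + 1) x y) b

lemma diffAt_prod {E ι : Type*} [NormedAddCommGroup E] [NormedSpace ℂ E] (s : Finset ι)
    (f : ι → E → ℂ) (p : E) (h : ∀ i ∈ s, DifferentiableAt ℂ (f i) p) :
    DifferentiableAt ℂ (fun p => ∏ i ∈ s, f i p) p := by
  classical
  induction s using Finset.induction_on with
  | empty => simp
  | insert a s ha ih =>
    simp only [Finset.prod_insert ha]
    exact (h a (Finset.mem_insert_self a s)).fun_mul
      (ih fun i hi => h i (Finset.mem_insert_of_mem hi))

lemma U0_lt (ap am : ℝ) (M : ℕ) (p) (hp : p ∈ U0 ap am M) : p.1.re < ap + am := by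
  have := hp.2 0
  have h := abs_nonneg (p.2 0).im
  linarith

lemma Fint_diff (ap am : ℝ) (hap : 0 < ap) (ham : 0 < am) (M : ℕ) (hJ : JC ap am M)
    (y : Fin (M + 2) → ℝ) (z : Fin (M + 1) → ℝ) :
    DifferentiableOn ℂ (fun p : ℂ × (Fin (M + 2) → ℂ) => Fint ap am M y p.1 p.2 z) (U0 ap am M) := by
  intro p hp
  apply DifferentiableAt.differentiableWithinAt
  have hlt := U0_lt ap am M p hp
  unfold Fint
  refine DifferentiableAt.fun_mul (DifferentiableAt.fun_mul ?_ ?_) ?_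
  · refine diffAt_prod _ _ _ fun q _ => ?_
    exact (wfun_diffAt ap am hap ham p.1 hp.1 hlt _).comp p
      (f := fun p : ℂ × (Fin (M + 2) → ℂ) => p.1) (by fun_prop)
  · refine diffAt_prod _ _ _ fun j _ => ?_
    refine diffAt_prod _ _ _ fun k _ => ?_
    exact (rker_diffAt ap am hap ham (p.1, p.2 j - z k) hp.1 (by simpa using hp.2 j)).comp p
      (f := fun p : ℂ × (Fin (M + 2) → ℂ) => (p.1, p.2 j - z k)) (by fun_prop)
  · exact ((hJ _).2 z p.1 hp.1 hlt).comp p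
      (f := fun p : ℂ × (Fin (M + 2) → ℂ) => p.1) (by fun_prop)

lemma Fint_cont (ap am : ℝ) (hap : 0 < ap) (ham : 0 < am) (M : ℕ) (hJ : JC ap am M)
    (y : Fin (M + 2) → ℝ) (p) (hp : p ∈ U0 ap am M) :
    Continuous (fun z => Fint ap am M y p.1 p.2 z) := by
  have hlt := U0_lt ap am M p hp
  unfold Fint
  refine Continuous.mul (Continuous.mul ?_ ?_) ?_
  · refine continuous_finsetProd _ fun q _ => ?_
    exact (wfun_cont ap am hap ham p.1 hp.1 hlt).comp
      (f := fun z : Fin (M + 1) → ℝ => z q.1 - z q.2) (by fun_prop)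
  · refine continuous_finsetProd _ fun j _ => continuous_finsetProd _ fun k _ => ?_
    exact (rker_cont ap am hap ham p.1 (p.2 j) hp.1 (hp.2 j)).comp
      (f := fun z : Fin (M + 1) → ℝ => z k) (by fun_prop)
  · exact (hJ _).1 p.1 hp.1 hlt

lemma Fint_local (ap am : ℝ) (hap : 0 < ap) (ham : 0 < am) (M : ℕ)
    (y : Fin (M + 2) → ℝ) (p₀) (hp₀ : p₀ ∈ U0 ap am M) :
    ∃ r > 0, ∃ B : (Fin (M + 1) → ℝ) → ℝ, Integrable B ∧ ∀ z, ∀ p ∈ Metric.ball p₀ r,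
      ‖Fint ap am M y p.1 p.2 z‖ ≤ B z := by
  obtain ⟨j₀, hj₀⟩ := Finite.exists_max (fun j => |(p₀.2 j).im|)
  have h0 := hp₀.2 j₀
  set s₁ := |(p₀.2 j₀).im| with hs₁
  set ρ := (ap + am - p₀.1.re - 2 * s₁) / 4 with hρ
  have hρ0 : 0 < ρ := by rw [hρ]; linarith
  have hs₁0 : 0 ≤ s₁ := abs_nonneg _
  obtain ⟨δ, hδ, κ, hκ, C, hC, h⟩ := step_bound ap am hap ham M (JB_all ap am hap ham M) y p₀.1
    hp₀.1 (s₁ + ρ) (by positivity) (by rw [hρ]; linarith) (alphaPar ap am / 2 * p₀.1.re)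
    (mul_pos (half_pos (alphaPar_pos ap am hap ham)) hp₀.1)
  refine ⟨min δ ρ, by positivity, fun z => C * Real.exp (κ * (M + 1) * ρ) *
    Real.exp (-κ * ∑ k, |z k - (p₀.2 0).re|), (int_exp_prod _ κ hκ _).1.const_mul _, ?_⟩
  intro z p hp
  rw [mem_ball_iff_norm, Prod.norm_def] at hp
  have hp1 : ‖p.1 - p₀.1‖ < δ := (le_max_left _ _).trans_lt (hp.trans_le (min_le_left _ _))
  have hp2 : ‖p.2 - p₀.2‖ < ρ := (le_max_right _ _).trans_lt (hp.trans_le (min_le_right _ _))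
  have hj : ∀ j, ‖p.2 j - p₀.2 j‖ < ρ := fun j => (norm_le_pi_norm (p.2 - p₀.2) j).trans_lt hp2
  have hb := h p.1 hp1 p.2 (fun j => by
    have h1 := (Complex.abs_im_le_norm _).trans (hj j).le
    rw [Complex.sub_im] at h1
    have h2 := abs_sub_abs_le_abs_sub (p.2 j).im (p₀.2 j).im
    have := hj₀ j
    linarith) z
  refine hb.trans ?_
  simp only
  rw [sub_self, neg_zero, zero_mul, Real.exp_zero, mul_one, mul_assoc C, ← Real.exp_add]
  refine mul_le_mul_of_nonneg_left (Real.exp_le_exp.2 ?_) hC.le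
  have h0 : |(p.2 0).re - (p₀.2 0).re| ≤ ρ := by
    rw [← Complex.sub_re]; exact (Complex.abs_re_le_norm _).trans (hj 0).le
  have hk : ∀ k, |z k - (p₀.2 0).re| ≤ |z k - (p.2 0).re| + ρ := fun k =>
    (abs_sub_le _ (p.2 0).re _).trans (by linarith)
  have hsum := Finset.sum_le_sum (s := Finset.univ) fun k _ => hk k
  rw [Finset.sum_add_distrib] at hsum
  simp only [Finset.sum_const, Finset.card_univ, Fintype.card_fin, nsmul_eq_mul] at hsum
  push_cast at hsum
  nlinarith [mul_le_mul_of_nonneg_left hsum hκ.le]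

lemma F0_hol (ap am : ℝ) (hap : 0 < ap) (ham : 0 < am) (M : ℕ) (hJ : JC ap am M)
    (y : Fin (M + 2) → ℝ) : DifferentiableOn ℂ (F0 ap am M y) (U0 ap am M) := by
  have h := hol_integral (μ := volume) (fun (p : ℂ × (Fin (M + 2) → ℂ)) z => Fint ap am M y p.1 p.2 z)
    (U0 ap am M) (U0_open ap am M)
    (Filter.Eventually.of_forall fun z => Fint_diff ap am hap ham M hJ y z)
    (fun p hp => (Fint_cont ap am hap ham M hJ y p hp).aestronglyMeasurable)
    (fun p₀ hp₀ => by
      obtain ⟨r, hr, B, hB, hb⟩ := Fint_local ap am hap ham M y p₀ hp₀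
      exact ⟨r, hr, B, hB, Filter.Eventually.of_forall fun z p hp _ => hb z p hp⟩)
  unfold F0
  refine DifferentiableOn.fun_mul (Differentiable.differentiableOn ?_) h
  simp only [div_eq_mul_inv]
  fun_prop

lemma F0_real (ap am : ℝ) (M : ℕ) (y x : Fin (M + 2) → ℝ) (b : ℂ) :
    F0 ap am M y (b, fun i => (x i : ℂ)) = Jrec ap am b (M + 2) x y := by
  rw [Jrec_eq, F0]

lemma real_mem_U0 (ap am : ℝ) (M : ℕ) (b : ℂ) (h0 : 0 < b.re) (h1 : b.re < ap + am)
    (x : Fin (M + 2) → ℝ) : (b, fun i => (x i : ℂ)) ∈ U0 ap am M := by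
  refine ⟨h0, fun j => ?_⟩
  simpa using h1

lemma JC_all (ap am : ℝ) (hap : 0 < ap) (ham : 0 < am) (M : ℕ) : JC ap am M := by
  induction M with
  | zero =>
    intro y
    constructor
    · intro b _ _
      simp only [Jrec]
      fun_prop
    · intro x b _ _
      simp only [Jrec]
      fun_prop
  | succ M ih =>
    intro y
    have h := F0_hol ap am hap ham M ih y
    constructor
    · intro b hb0 hb1
      simp only [← F0_real]
      exact h.continuousOn.comp_continuous (by fun_prop) fun x => real_mem_U0 ap am M b hb0 hb1 x
    · intro x b hb0 hb1
      simp only [← F0_real]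
      have hm := real_mem_U0 ap am M b hb0 hb1 x
      exact ((h _ hm).differentiableAt ((U0_open ap am M).mem_nhds hm)).comp b
        (f := fun b : ℂ => (b, fun i => (x i : ℂ))) (by fun_prop)

lemma Fint_integrable (ap am : ℝ) (hap : 0 < ap) (ham : 0 < am) (M : ℕ)
    (y : Fin (M + 2) → ℝ) (p) (hp : p ∈ U0 ap am M) :
    Integrable (fun z => Fint ap am M y p.1 p.2 z) := by
  obtain ⟨r, hr, B, hB, hb⟩ := Fint_local ap am hap ham M y p hp
  exact hB.mono' (Fint_cont ap am hap ham M (JC_all ap am hap ham M) y p hp).aestronglyMeasurable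
    (Filter.Eventually.of_forall fun z => hb z p (Metric.mem_ball_self hr))

/-- translation covariance -/
lemma F0_trans_of (ap am : ℝ) (M : ℕ) (y : Fin (M + 2) → ℝ) (b : ℂ) (x : Fin (M + 2) → ℂ) (t : ℝ)
    (hJ : ∀ z : Fin (M + 1) → ℝ, ∀ y : Fin (M + 1) → ℝ, Jrec ap am b (M + 1) (fun k => z k + t) y =
      Complex.exp (I * alphaPar ap am * t * ∑ j, (y j : ℂ)) * Jrec ap am b (M + 1) z y) :
    F0 ap am M y (b, fun j => x j + t) =
      Complex.exp (I * alphaPar ap am * t * ∑ j, (y j : ℂ)) * F0 ap am M y (b, x) := by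
  have h1 : ∫ z : Fin (M + 1) → ℝ, Fint ap am M y b (fun j => x j + t) z =
      Complex.exp (I * alphaPar ap am * t * ∑ j : Fin (M + 1), ((y (Fin.castSucc j) - y (Fin.last (M + 1)) : ℝ) : ℂ)) *
        ∫ z : Fin (M + 1) → ℝ, Fint ap am M y b x z := by
    rw [← integral_const_mul, ← integral_add_right_eq_self (μ := volume) _ (fun _ : Fin (M + 1) => t)]
    refine integral_congr_ae (Filter.Eventually.of_forall fun z => ?_)
    simp only [Fint]
    have e : (z + fun _ => t) = fun k => z k + t := rfl
    rw [e, hJ]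
    simp only [add_sub_add_right_eq_sub, Complex.ofReal_add]
    ring
  simp only [F0]
  rw [h1]
  have h2 : I * (alphaPar ap am : ℂ) * (y (Fin.last (M + 1)) : ℂ) * ∑ j, (x j + (t : ℂ)) +
      I * alphaPar ap am * t * ∑ j : Fin (M + 1), ((y (Fin.castSucc j) - y (Fin.last (M + 1)) : ℝ) : ℂ) =
      I * alphaPar ap am * t * ∑ j, (y j : ℂ) +
      I * (alphaPar ap am : ℂ) * (y (Fin.last (M + 1)) : ℂ) * ∑ j, x j := by
    rw [Fin.sum_univ_castSucc (fun j => (y j : ℂ))]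
    simp only [Complex.ofReal_sub, Finset.sum_sub_distrib, Finset.sum_add_distrib, Finset.sum_const,
      Finset.card_univ, Fintype.card_fin, nsmul_eq_mul]
    push_cast
    ring
  have h3 := congrArg Complex.exp h2
  rw [Complex.exp_add, Complex.exp_add] at h3
  rw [div_mul_eq_mul_div, div_mul_eq_mul_div, mul_div_assoc', ← mul_assoc, ← mul_assoc, h3]

lemma Jrec_trans (ap am : ℝ) (M : ℕ) (b : ℂ) (t : ℝ) : ∀ (x y : Fin (M + 1) → ℝ),
    Jrec ap am b (M + 1) (fun k => x k + t) y =
      Complex.exp (I * alphaPar ap am * t * ∑ j, (y j : ℂ)) * Jrec ap am b (M + 1) x y := by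
  induction M with
  | zero =>
    intro x y
    simp only [Jrec]
    rw [← Complex.exp_add]
    congr 1
    simp
    ring
  | succ M ih =>
    intro x y
    rw [← F0_real, ← F0_real, ← F0_trans_of ap am M y b _ t ih]
    simp

lemma F0_trans (ap am : ℝ) (M : ℕ) (y : Fin (M + 2) → ℝ) (b : ℂ) (x : Fin (M + 2) → ℂ) (t : ℝ) :
    F0 ap am M y (b, fun j => x j + t) =
      Complex.exp (I * alphaPar ap am * t * ∑ j, (y j : ℂ)) * F0 ap am M y (b, x) :=
  F0_trans_of ap am M y b x t (Jrec_trans ap am M b t)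

noncomputable def Hx (ap am : ℝ) (M : ℕ) (y : Fin (M + 2) → ℝ) (p : ℂ × (Fin (M + 2) → ℂ)) (τ : ℂ) : ℂ :=
  Complex.exp (-(I * alphaPar ap am * τ * ∑ j, (y j : ℂ))) * F0 ap am M y (p.1, fun j => p.2 j + τ)

def Tset (ap am : ℝ) (M : ℕ) (p : ℂ × (Fin (M + 2) → ℂ)) : Set ℂ :=
  {τ | (p.1, fun j => p.2 j + τ) ∈ U0 ap am M}

lemma Tset_open (ap am : ℝ) (M : ℕ) (p) : IsOpen (Tset ap am M p) :=
  (U0_open ap am M).preimage (f := fun τ : ℂ => (p.1, fun j => p.2 j + τ)) (by fun_prop)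

lemma Tset_convex (ap am : ℝ) (M : ℕ) (p) : Convex ℝ (Tset ap am M p) := by
  intro τ h1 σ h2 a b ha hb hab
  refine ⟨h1.1, fun j => ?_⟩
  have k1 := h1.2 j
  have k2 := h2.2 j
  simp only [add_im] at k1 k2 ⊢
  have e : (p.2 j).im + (a • τ + b • σ).im = a * ((p.2 j).im + τ.im) + b * ((p.2 j).im + σ.im) := by
    have : b = 1 - a := by linarith
    subst this
    simp; ring
  rw [← add_im, ← add_im, add_im, add_im, ← add_im (a • τ), e]
  have t : |a * ((p.2 j).im + τ.im) + b * ((p.2 j).im + σ.im)| ≤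
      a * |(p.2 j).im + τ.im| + b * |(p.2 j).im + σ.im| := by
    refine (abs_add_le _ _).trans ?_
    rw [abs_mul, abs_mul, abs_of_nonneg ha, abs_of_nonneg hb]
  have hb' : b = 1 - a := by linarith
  rcases ha.eq_or_lt with h | h
  · subst h; simp only [zero_add] at hab; subst hab; linarith
  · subst hb'
    have m1 := mul_lt_mul_of_pos_left k1 h
    have m2 := mul_le_mul_of_nonneg_left k2.le hb
    linarith

lemma Hx_shift (ap am : ℝ) (M : ℕ) (y : Fin (M + 2) → ℝ) (p : ℂ × (Fin (M + 2) → ℂ)) (τ : ℂ) (t : ℝ) :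
    Hx ap am M y p (τ + t) = Hx ap am M y p τ := by
  have h := F0_trans ap am M y p.1 (fun j => p.2 j + τ) t
  simp only [Hx, ← add_assoc]
  rw [h, ← mul_assoc, ← Complex.exp_add]
  congr 2
  ring

lemma Hx_diff (ap am : ℝ) (hap : 0 < ap) (ham : 0 < am) (M : ℕ) (y : Fin (M + 2) → ℝ)
    (p : ℂ × (Fin (M + 2) → ℂ)) (τ : ℂ) (hτ : τ ∈ Tset ap am M p) :
    DifferentiableAt ℂ (fun q : (ℂ × (Fin (M + 2) → ℂ)) × ℂ => Hx ap am M y q.1 q.2) (p, τ) := by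
  unfold Hx
  have h := (F0_hol ap am hap ham M (JC_all ap am hap ham M) y _ hτ).differentiableAt
    ((U0_open ap am M).mem_nhds hτ)
  refine DifferentiableAt.fun_mul (by fun_prop) ?_
  exact h.comp (p, τ) (f := fun q : (ℂ × (Fin (M + 2) → ℂ)) × ℂ => (q.1.1, fun j => q.1.2 j + q.2))
    (by fun_prop)

lemma Hx_indep (ap am : ℝ) (hap : 0 < ap) (ham : 0 < am) (M : ℕ) (y : Fin (M + 2) → ℝ)
    (p : ℂ × (Fin (M + 2) → ℂ)) (τ σ : ℂ) (hτ : τ ∈ Tset ap am M p) (hσ : σ ∈ Tset ap am M p) :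
    Hx ap am M y p τ = Hx ap am M y p σ := by
  have hd : ∀ τ ∈ Tset ap am M p, DifferentiableAt ℂ (Hx ap am M y p) τ := fun τ hτ =>
    (Hx_diff ap am hap ham M y p τ hτ).comp τ (f := fun τ : ℂ => (p, τ)) (by fun_prop)
  refine (Tset_open ap am M p).is_const_of_deriv_eq_zero (Tset_convex ap am M p).isPreconnected
    (fun τ hτ => (hd τ hτ).differentiableWithinAt) ?_ hτ hσ
  intro τ hτ
  have h1 := (hd τ hτ).hasDerivAt
  have h2 : HasDerivAt (fun t : ℝ => τ + (t : ℂ)) 1 0 := by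
    simpa using (Complex.ofRealCLM.hasDerivAt (x := (0:ℝ))).const_add τ
  have h3 : HasDerivAt (fun t : ℝ => Hx ap am M y p (τ + t)) (deriv (Hx ap am M y p) τ * 1) 0 := by
    refine HasDerivAt.comp_of_eq (0:ℝ) (h₂ := Hx ap am M y p) (h := fun t : ℝ => τ + (t : ℂ)) h1 h2 (by simp)
  simp only [Hx_shift] at h3
  have := h3.unique (hasDerivAt_const _ _)
  simpa using this

lemma Tset_nonempty (ap am : ℝ) (M : ℕ) (p) (hp : p ∈ DN ap am (M + 2)) :
    ∃ τ, τ ∈ Tset ap am M p := by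
  obtain ⟨i, hi⟩ := Finite.exists_max (fun j => (p.2 j).im)
  obtain ⟨k, hk⟩ := Finite.exists_min (fun j => (p.2 j).im)
  refine ⟨((-(((p.2 i).im + (p.2 k).im) / 2) : ℝ) : ℂ) * I, hp.1.1, fun j => ?_⟩
  have h := hp.2 i k
  rw [sub_im] at h
  have h' := (abs_lt.1 h).2
  have e : (p.2 j + ((-(((p.2 i).im + (p.2 k).im) / 2) : ℝ) : ℂ) * I).im =
      (p.2 j).im - ((p.2 i).im + (p.2 k).im) / 2 := by
    have hr : ∀ r : ℝ, ((r : ℂ) * I).im = r := fun r => by simp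
    rw [add_im, hr]
    ring
  simp only [e]
  have h1 := hi j
  have h2 := hk j
  have : |(p.2 j).im - ((p.2 i).im + (p.2 k).im) / 2| ≤ ((p.2 i).im - (p.2 k).im) / 2 := by
    rw [abs_le]; constructor <;> linarith
  linarith

open Classical in
noncomputable def Fext (ap am : ℝ) (M : ℕ) (y : Fin (M + 2) → ℝ) (p : ℂ × (Fin (M + 2) → ℂ)) : ℂ :=
  if h : ∃ τ, τ ∈ Tset ap am M p then Hx ap am M y p h.choose else 0

lemma Fext_eq (ap am : ℝ) (hap : 0 < ap) (ham : 0 < am) (M : ℕ) (y : Fin (M + 2) → ℝ)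
    (p : ℂ × (Fin (M + 2) → ℂ)) (τ : ℂ) (hτ : τ ∈ Tset ap am M p) :
    Fext ap am M y p = Hx ap am M y p τ := by
  have h : ∃ τ, τ ∈ Tset ap am M p := ⟨τ, hτ⟩
  rw [Fext, dif_pos h]
  exact Hx_indep ap am hap ham M y p _ _ h.choose_spec hτ

lemma Fext_diff (ap am : ℝ) (hap : 0 < ap) (ham : 0 < am) (M : ℕ) (y : Fin (M + 2) → ℝ) :
    DifferentiableOn ℂ (Fext ap am M y) (DN ap am (M + 2)) := by
  intro p hp
  obtain ⟨τ, hτ⟩ := Tset_nonempty ap am M p hp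
  apply DifferentiableAt.differentiableWithinAt
  have h : DifferentiableAt ℂ (fun p => Hx ap am M y p τ) p :=
    (Hx_diff ap am hap ham M y p τ hτ).comp p
      (f := fun p : ℂ × (Fin (M + 2) → ℂ) => (p, τ)) (by fun_prop)
  refine h.congr_of_eventuallyEq ?_
  have ho : IsOpen {p : ℂ × (Fin (M + 2) → ℂ) | τ ∈ Tset ap am M p} :=
    (U0_open ap am M).preimage (f := fun p : ℂ × (Fin (M + 2) → ℂ) => (p.1, fun j => p.2 j + τ))
      (by fun_prop)
  filter_upwards [ho.mem_nhds hτ] with q hq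
  exact Fext_eq ap am hap ham M y q τ hq

lemma Fext_real (ap am : ℝ) (hap : 0 < ap) (ham : 0 < am) (M : ℕ) (y x : Fin (M + 2) → ℝ) (b : ℂ)
    (h0 : 0 < b.re) (h1 : b.re < ap + am) :
    Fext ap am M y (b, fun i => (x i : ℂ)) = Jrec ap am b (M + 2) x y := by
  have hm : (0:ℂ) ∈ Tset ap am M (b, fun i => (x i : ℂ)) := by
    have := real_mem_U0 ap am M b h0 h1 x
    simpa [Tset] using this
  rw [Fext_eq ap am hap ham M y _ 0 hm, Hx, ← F0_real]
  simp

lemma DN_uniq (ap am : ℝ) (M : ℕ) (F F' : ℂ × (Fin (M + 2) → ℂ) → ℂ)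
    (hF : DifferentiableOn ℂ F (DN ap am (M + 2))) (hF' : DifferentiableOn ℂ F' (DN ap am (M + 2)))
    (h : ∀ b : ℂ, 0 < b.re → b.re < ap + am → ∀ x : Fin (M + 2) → ℝ,
      F' (b, fun i => (x i : ℂ)) = F (b, fun i => (x i : ℂ))) :
    Set.EqOn F' F (DN ap am (M + 2)) := by
  intro p hp
  let φ : ℂ → ℂ × (Fin (M + 2) → ℂ) := fun τ => (p.1, fun j => ((p.2 j).re : ℂ) + τ * ((p.2 j).im : ℂ))
  have hφ : Differentiable ℂ φ := by fun_prop
  have him : ∀ τ j k, ((φ τ).2 j - (φ τ).2 k).im = τ.im * ((p.2 j).im - (p.2 k).im) := by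
    intro τ j k
    simp [φ]; ring
  let V : Set ℂ := φ ⁻¹' (DN ap am (M + 2))
  have hVeq : V = {τ | ∀ j k, |τ.im * ((p.2 j).im - (p.2 k).im)| < ap + am - p.1.re} := by
    ext τ
    constructor
    · intro hτ j k
      rw [← him]; exact hτ.2 j k
    · intro hτ
      refine ⟨hp.1, fun j k => ?_⟩
      rw [him]; exact hτ j k
  have hVo : IsOpen V := by
    rw [hVeq]
    simp only [Set.ofPred_forall]
    refine isOpen_iInter_of_finite fun j => isOpen_iInter_of_finite fun k => ?_
    exact isOpen_lt (by fun_prop) (by fun_prop)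
  have hVc : Convex ℝ V := by
    rw [hVeq]
    intro τ h1 σ h2 a b ha hb hab j k
    have k1 := abs_lt.1 (h1 j k)
    have k2 := abs_lt.1 (h2 j k)
    have e : (a • τ + b • σ).im * ((p.2 j).im - (p.2 k).im) =
      a * (τ.im * ((p.2 j).im - (p.2 k).im)) + b * (σ.im * ((p.2 j).im - (p.2 k).im)) := by
      simp; ring
    rw [e]
    have : ∀ K u v : ℝ, -K < u ∧ u < K → -K < v ∧ v < K → |a * u + b * v| < K := by
      intro K u v hu hv
      exact abs_lt.2 (convex_Ioo (-K) K hu hv ha hb hab)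
    exact this _ _ _ k1 k2
  have han : ∀ G : ℂ × (Fin (M + 2) → ℂ) → ℂ, DifferentiableOn ℂ G (DN ap am (M + 2)) →
      AnalyticOnNhd ℂ (fun τ => G (φ τ)) V := fun G hG =>
    (hG.comp hφ.differentiableOn (fun _ hτ => hτ)).analyticOnNhd hVo
  have hreal : ∀ t : ℝ, F' (φ t) = F (φ t) := by
    intro t
    have := h p.1 hp.1.1 hp.1.2 (fun j => (p.2 j).re + t * (p.2 j).im)
    simpa [φ] using this
  have h0 : (0:ℂ) ∈ V := by
    rw [hVeq]; intro j k; simp; exact hp.1.2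
  have hI : I ∈ V := by
    rw [hVeq]; intro j k
    have := hp.2 j k
    simpa using this
  have hfreq : ∃ᶠ τ in nhdsWithin (0:ℂ) {0}ᶜ, F' (φ τ) = F (φ τ) := by
    have ht : Filter.Tendsto (fun t : ℝ => (t : ℂ)) (nhdsWithin (0:ℝ) {0}ᶜ) (nhdsWithin (0:ℂ) {0}ᶜ) := by
      refine tendsto_nhdsWithin_iff.2 ⟨?_, ?_⟩
      · have : Filter.Tendsto (fun t : ℝ => (t : ℂ)) (nhds 0) (nhds ((0:ℝ):ℂ)) :=
          Complex.continuous_ofReal.tendsto 0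
        rw [Complex.ofReal_zero] at this
        exact this.mono_left nhdsWithin_le_nhds
      · filter_upwards [self_mem_nhdsWithin] with t ht
        simpa using ht
    exact ht.frequently (Filter.Eventually.frequently (Filter.Eventually.of_forall hreal))
  have hfin := (han F' hF').eqOn_of_preconnected_of_frequently_eq (han F hF) hVc.isPreconnected h0 hfreq hI
  have hpe : φ I = p := by
    refine Prod.ext rfl (funext fun j => ?_)
    simp only [φ]
    rw [mul_comm]; exact Complex.re_add_im _
  simpa only [hpe] using hfin

/-- Prop. 6.1: for `N ≥ 2` and fixed real `y`, all the integrals in the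
recursive definition of `J_N(b;x,y)` converge absolutely for `b ∈ S_a`, and `J_N(b;·,y)` has
a unique holomorphic extension to the domain `D_N`. -/
theorem statement15 (ap am : ℝ) (hap : 0 < ap) (ham : 0 < am)
    (N : ℕ) (hN : 2 ≤ N) (y : Fin N → ℝ) :
    (∀ b : ℂ, 0 < b.re → b.re < ap + am →
      ∀ M : ℕ, M + 2 ≤ N → ∀ x' y' : Fin (M + 2) → ℝ,
      Integrable (fun z : Fin (M + 1) → ℝ =>
        (∏ q ∈ Finset.univ.filter (fun q : Fin (M + 1) × Fin (M + 1) => q.1 < q.2),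
          wfun ap am b (z q.1 - z q.2)) *
        (∏ j : Fin (M + 2), ∏ k : Fin (M + 1), rker ap am b ((x' j : ℂ) - (z k : ℂ))) *
        Jrec ap am b (M + 1) z
          (fun j => y' (Fin.castSucc j) - y' (Fin.last (M + 1))))) ∧
    ∃ F : ℂ × (Fin N → ℂ) → ℂ,
      (DifferentiableOn ℂ F (DN ap am N) ∧
        ∀ b : ℂ, 0 < b.re → b.re < ap + am → ∀ x : Fin N → ℝ,
          F (b, fun i => (x i : ℂ)) = Jrec ap am b N x y) ∧
      ∀ F' : ℂ × (Fin N → ℂ) → ℂ,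
        DifferentiableOn ℂ F' (DN ap am N) →
        (∀ b : ℂ, 0 < b.re → b.re < ap + am → ∀ x : Fin N → ℝ,
          F' (b, fun i => (x i : ℂ)) = Jrec ap am b N x y) →
        Set.EqOn F' F (DN ap am N) := by
  constructor
  · intro b hb0 hb1 M _ x' y'
    have h := Fint_integrable ap am hap ham M y' (b, fun i => (x' i : ℂ))
      (real_mem_U0 ap am M b hb0 hb1 x')
    simp only [Fint] at h
    exact h
  · obtain ⟨M, rfl⟩ : ∃ M, N = M + 2 := ⟨N - 2, by omega⟩
    refine ⟨Fext ap am M y, ⟨Fext_diff ap am hap ham M y, fun b h0 h1 x =>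
      Fext_real ap am hap ham M y x b h0 h1⟩, fun F' hF' hr => ?_⟩
    exact DN_uniq ap am M _ F' (Fext_diff ap am hap ham M y) hF' fun b h0 h1 x =>
      (hr b h0 h1 x).trans (Fext_real ap am hap ham M y x b h0 h1).symm
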